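/- arXiv:2507.04819 — 8 statements merged into one kernel-verified Lean document; each statement's English description precedes it below -/
import Mathlib

section
/- Let v, p₁, p₂, q₁, q₂ ∈ FreeMonoid A with p₁ a suffix of p₂ and q₁ a prefix of q₂. If the words p₁ * v * q₂ and p₂ * v * q₁ are both invertible, then the words p₁ * v * q₁ and p₂ * v * q₂ are both invertible. (This says that the invertible subwords of a word u containing a fixed occurrence of v are closed under meet and join with respect to subword inclusion, so that, when nonempty, they form a lattice.) -/
/-!
Write `p₂ = α * p₁` and `q₂ = q₁ * β`, let `u = p₁ * v * q₁`, and identify words with their images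
in the monoid. Since `u * β` is a unit, `u` has a right inverse, and since `α * u` is a unit, it has
a left inverse; hence `u` is a unit. Cancelling `u` from `u * β`, the factor `β` is a unit, and so
is the product of `α * u` and `β`.
-/

section Monoid

variable {M : Type*} [Monoid M] {a b u : M}

theorem isUnit_of_isUnit_mul_of_isUnit_mul (hau : IsUnit (a * u)) (hub : IsUnit (u * b)) :
    IsUnit u := by
  obtain ⟨l, hl⟩ := hau.exists_left_inv
  obtain ⟨r, hr⟩ := hub.exists_right_inv
  exact isUnit_iff_exists_and_exists.2
    ⟨⟨b * r, by rwa [← mul_assoc]⟩, ⟨l * a, by rwa [mul_assoc]⟩⟩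

theorem isUnit_mul_mul_of_isUnit_mul_of_isUnit_mul (hau : IsUnit (a * u)) (hub : IsUnit (u * b)) :
    IsUnit (a * u * b) :=
  have hu : IsUnit u := isUnit_of_isUnit_mul_of_isUnit_mul hau hub
  have hb : IsUnit b := hu.mul_left_iff.1 hub
  hau.mul hb

end Monoid

theorem invertible_subwords_lattice_general {N M : Type*} [Monoid N] [Monoid M] (f : N →* M)
    (v p₁ p₂ q₁ q₂ : N) (hp : ∃ α, p₂ = α * p₁) (hq : ∃ β, q₂ = q₁ * β)
    (h₁ : IsUnit (f (p₁ * v * q₂))) (h₂ : IsUnit (f (p₂ * v * q₁))) :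
    IsUnit (f (p₁ * v * q₁)) ∧ IsUnit (f (p₂ * v * q₂)) := by
  obtain ⟨α, rfl⟩ := hp
  obtain ⟨β, rfl⟩ := hq
  have hα : IsUnit (f α * f (p₁ * v * q₁)) := by simpa only [← map_mul, mul_assoc] using h₂
  have hβ : IsUnit (f (p₁ * v * q₁) * f β) := by simpa only [← map_mul, mul_assoc] using h₁
  refine ⟨isUnit_of_isUnit_mul_of_isUnit_mul hα hβ, ?_⟩
  simpa only [← map_mul, mul_assoc] using isUnit_mul_mul_of_isUnit_mul_of_isUnit_mul hα hβ

/-- In a special monoid `M = ⟨A ∣ w₁ = 1, …, w_k = 1⟩`, if `p₁` is a suffix of `p₂`,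
`q₁` is a prefix of `q₂`, and the words `p₁ * v * q₂` and `p₂ * v * q₁` are both
invertible (i.e. map to units of `M`), then `p₁ * v * q₁` and `p₂ * v * q₂` are
both invertible. -/
theorem invertible_subwords_lattice {A : Type*} [Fintype A] {k : ℕ}
    (w : Fin k → FreeMonoid A)
    (rel : FreeMonoid A → FreeMonoid A → Prop)
    (hrel : ∀ x y, rel x y ↔ ∃ i : Fin k, x = w i ∧ y = 1)
    (v p₁ p₂ q₁ q₂ : FreeMonoid A)
    (hp : ∃ α, p₂ = α * p₁) (hq : ∃ β, q₂ = q₁ * β)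
    (h₁ : IsUnit (PresentedMonoid.mk rel (p₁ * v * q₂)))
    (h₂ : IsUnit (PresentedMonoid.mk rel (p₂ * v * q₁))) :
    IsUnit (PresentedMonoid.mk rel (p₁ * v * q₁)) ∧
      IsUnit (PresentedMonoid.mk rel (p₂ * v * q₂)) :=
  invertible_subwords_lattice_general (PresentedMonoid.mk rel) v p₁ p₂ q₁ q₂ hp hq h₁ h₂
end

section
/- Let u₀, v, u₁ ∈ FreeMonoid A with v nonempty, and suppose there exist a suffix p of u₀ and a prefix q of u₁ such that p * v * q is invertible. Then there exist a suffix p₀ of u₀ and a prefix q₀ of u₁ such that: (i) p₀ * v * q₀ is invertible; (ii) for every suffix p of u₀ and prefix q of u₁ with p * v * q invertible, p₀ is a suffix of p and q₀ is a prefix of q (i.e. p₀ * v * q₀ is the unique smallest invertible subword of u₀ * v * u₁ containing this occurrence of v); and (iii) no nonempty prefix of p₀ is invertible and no nonempty suffix of q₀ is invertible. -/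
/-!
Suffixes of `u₀` are linearly ordered by length, and so are prefixes of `u₁`. Let `p₀` be the
shortest suffix and `q₀` the shortest prefix occurring in *any* invertible `p * v * q`, say in
`p₀ * v * q'` and in `p' * v * q₀`. These two subwords overlap exactly in `p₀ * v * q₀`, and in any
monoid `x * y` and `y * z` invertible force `y` invertible, so `p₀ * v * q₀` is itself invertible.
An invertible prefix of `p₀`, or suffix of `q₀`, could be cancelled, contradicting minimality.
-/

section Monoid

variable {M : Type*} [Monoid M]

theorem isUnit_of_isUnit_mul_of_isUnit_mul_s2 {x y z : M} (hxy : IsUnit (x * y))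
    (hyz : IsUnit (y * z)) : IsUnit y := by
  obtain ⟨c, hc⟩ := hxy.exists_left_inv
  obtain ⟨d, hd⟩ := hyz.exists_right_inv
  exact isUnit_iff_exists_and_exists.2
    ⟨⟨z * d, by rw [← mul_assoc, hd]⟩, ⟨c * x, by rw [mul_assoc, hc]⟩⟩

end Monoid

section Words

variable {A : Type*} {p p' q q' u : FreeMonoid A}

/-- The word `p` is a suffix of the word `u`; stated multiplicatively rather than through
`List.IsSuffix`, so that monoid homomorphisms apply directly. -/
def IsSuffix (p u : FreeMonoid A) : Prop := ∃ α, u = α * p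

/-- The word `q` is a prefix of the word `u`; the mirror image of `IsSuffix`. -/
def IsPrefix (q u : FreeMonoid A) : Prop := ∃ β, u = q * β

theorem IsSuffix.of_mul (h : IsSuffix (p * p') u) : IsSuffix p' u := by
  obtain ⟨α, rfl⟩ := h
  exact ⟨α * p, (mul_assoc α p p').symm⟩

theorem IsPrefix.of_mul (h : IsPrefix (q * q') u) : IsPrefix q u := by
  obtain ⟨β, rfl⟩ := h
  exact ⟨q' * β, mul_assoc q q' β⟩

theorem IsSuffix.eq_one_of_mul_left (h : IsSuffix (p * u) u) : p = 1 := by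
  obtain ⟨α, hα⟩ := h
  rw [← mul_assoc, right_eq_mul] at hα
  exact (List.append_eq_nil_iff.1 hα).2

theorem IsPrefix.eq_one_of_mul_right (h : IsPrefix (u * q) u) : q = 1 := by
  obtain ⟨β, hβ⟩ := h
  rw [mul_assoc, left_eq_mul] at hβ
  exact (List.append_eq_nil_iff.1 hβ).1

theorem IsSuffix.of_length_le (hp : IsSuffix p u) (hp' : IsSuffix p' u)
    (hle : p.length ≤ p'.length) : IsSuffix p p' := by
  obtain ⟨α, hα⟩ := hp
  obtain ⟨α', hα'⟩ := hp'
  obtain ⟨γ, hγ⟩ : p.toList <:+ p'.toList :=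
    List.suffix_of_suffix_length_le ⟨α, hα.symm⟩ ⟨α', hα'.symm⟩ hle
  exact ⟨γ, hγ.symm⟩

theorem IsPrefix.of_length_le (hq : IsPrefix q u) (hq' : IsPrefix q' u)
    (hle : q.length ≤ q'.length) : IsPrefix q q' := by
  obtain ⟨β, hβ⟩ := hq
  obtain ⟨β', hβ'⟩ := hq'
  obtain ⟨γ, hγ⟩ : q.toList <+: q'.toList :=
    List.prefix_of_prefix_length_le ⟨β, hβ.symm⟩ ⟨β', hβ'.symm⟩ hle
  exact ⟨γ, hγ.symm⟩

theorem exists_forall_length_le {S : Set (FreeMonoid A)} (hS : S.Nonempty) :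
    ∃ p₀ ∈ S, ∀ p ∈ S, p₀.length ≤ p.length :=
  ⟨_, Function.argminOn_mem FreeMonoid.length S hS,
    fun _ hp => Function.argminOn_le FreeMonoid.length S hp⟩

theorem exists_least_suffix {S : Set (FreeMonoid A)} (hS : S.Nonempty)
    (hu : ∀ p ∈ S, IsSuffix p u) : ∃ p₀ ∈ S, ∀ p ∈ S, IsSuffix p₀ p := by
  obtain ⟨p₀, hp₀, hle⟩ := exists_forall_length_le hS
  exact ⟨p₀, hp₀, fun p hp => (hu p₀ hp₀).of_length_le (hu p hp) (hle p hp)⟩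

theorem exists_least_prefix {S : Set (FreeMonoid A)} (hS : S.Nonempty)
    (hu : ∀ q ∈ S, IsPrefix q u) : ∃ q₀ ∈ S, ∀ q ∈ S, IsPrefix q₀ q := by
  obtain ⟨q₀, hq₀, hle⟩ := exists_forall_length_le hS
  exact ⟨q₀, hq₀, fun q hq => (hu q₀ hq₀).of_length_le (hu q hq) (hle q hq)⟩

end Words

section InvertibleWords

variable {A M : Type*} [Monoid M] {f : FreeMonoid A →* M}

theorem eq_one_of_isPrefix_of_least_suffix {u x p₀ p : FreeMonoid A} (hp₀ : IsSuffix p₀ u)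
    (hunit : IsUnit (f (p₀ * x)))
    (hleast : ∀ r, IsSuffix r u → IsUnit (f (r * x)) → IsSuffix p₀ r)
    (hp : IsPrefix p p₀) (hpunit : IsUnit (f p)) : p = 1 := by
  obtain ⟨r, rfl⟩ := hp
  have hr : IsUnit (f (r * x)) := by
    rwa [mul_assoc, map_mul, hpunit.mul_left_iff] at hunit
  exact (hleast r hp₀.of_mul hr).eq_one_of_mul_left

theorem eq_one_of_isSuffix_of_least_prefix {u x q₀ s : FreeMonoid A} (hq₀ : IsPrefix q₀ u)
    (hunit : IsUnit (f (x * q₀)))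
    (hleast : ∀ r, IsPrefix r u → IsUnit (f (x * r)) → IsPrefix q₀ r)
    (hs : IsSuffix s q₀) (hsunit : IsUnit (f s)) : s = 1 := by
  obtain ⟨r, rfl⟩ := hs
  have hr : IsUnit (f (x * r)) := by
    rwa [← mul_assoc, map_mul, hsunit.mul_right_iff] at hunit
  exact (hleast r hq₀.of_mul hr).eq_one_of_mul_right

theorem isUnit_map_of_overlap {v p p' q q' : FreeMonoid A} (hp : IsSuffix p p')
    (hq : IsPrefix q q') (hpq' : IsUnit (f (p * v * q'))) (hp'q : IsUnit (f (p' * v * q))) :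
    IsUnit (f (p * v * q)) := by
  obtain ⟨α, rfl⟩ := hp
  obtain ⟨β, rfl⟩ := hq
  refine isUnit_of_isUnit_mul_of_isUnit_mul_s2 (x := f α) (z := f β) ?_ ?_
  · simpa only [map_mul, mul_assoc] using hp'q
  · simpa only [map_mul, mul_assoc] using hpq'

theorem exists_least_invertible_subword {u₀ v u₁ : FreeMonoid A}
    (hex : ∃ p q, IsSuffix p u₀ ∧ IsPrefix q u₁ ∧ IsUnit (f (p * v * q))) :
    ∃ p₀ q₀, IsSuffix p₀ u₀ ∧ IsPrefix q₀ u₁ ∧ IsUnit (f (p₀ * v * q₀)) ∧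
      ∀ p q, IsSuffix p u₀ → IsPrefix q u₁ → IsUnit (f (p * v * q)) →
        IsSuffix p₀ p ∧ IsPrefix q₀ q := by
  obtain ⟨p, q, hp, hq, hpq⟩ := hex
  obtain ⟨p₀, ⟨hp₀, q', hq', hp₀q'⟩, hp₀least⟩ := exists_least_suffix
    (S := {p | IsSuffix p u₀ ∧ ∃ q, IsPrefix q u₁ ∧ IsUnit (f (p * v * q))})
    ⟨p, hp, q, hq, hpq⟩ fun _ h => h.1
  obtain ⟨q₀, ⟨hq₀, p', hp', hp'q₀⟩, hq₀least⟩ := exists_least_prefix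
    (S := {q | IsPrefix q u₁ ∧ ∃ p, IsSuffix p u₀ ∧ IsUnit (f (p * v * q))})
    ⟨q, hq, p, hp, hpq⟩ fun _ h => h.1
  have hp₀p' : IsSuffix p₀ p' := hp₀least p' ⟨hp', q₀, hq₀, hp'q₀⟩
  have hq₀q' : IsPrefix q₀ q' := hq₀least q' ⟨hq', p₀, hp₀, hp₀q'⟩
  exact ⟨p₀, q₀, hp₀, hq₀, isUnit_map_of_overlap hp₀p' hq₀q' hp₀q' hp'q₀, fun p q hp hq hpq =>
    ⟨hp₀least p ⟨hp, q, hq, hpq⟩, hq₀least q ⟨hq, p, hp, hpq⟩⟩⟩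

theorem min_invertible_subword_general (f : FreeMonoid A →* M) (u₀ v u₁ : FreeMonoid A)
    (hex : ∃ p q, IsSuffix p u₀ ∧ IsPrefix q u₁ ∧ IsUnit (f (p * v * q))) :
    ∃ p₀ q₀, IsSuffix p₀ u₀ ∧ IsPrefix q₀ u₁ ∧ IsUnit (f (p₀ * v * q₀)) ∧
      (∀ p q, IsSuffix p u₀ → IsPrefix q u₁ → IsUnit (f (p * v * q)) →
        IsSuffix p₀ p ∧ IsPrefix q₀ q) ∧
      (∀ p, p ≠ 1 → IsPrefix p p₀ → ¬ IsUnit (f p)) ∧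
      (∀ s, s ≠ 1 → IsSuffix s q₀ → ¬ IsUnit (f s)) := by
  obtain ⟨p₀, q₀, hp₀, hq₀, hunit, hleast⟩ := exists_least_invertible_subword hex
  refine ⟨p₀, q₀, hp₀, hq₀, hunit, hleast, fun p hp hpp₀ hpunit => hp ?_,
    fun s hs hsq₀ hsunit => hs ?_⟩
  · refine eq_one_of_isPrefix_of_least_suffix (x := v * q₀) hp₀ ?_ (fun r hr hrunit => ?_)
      hpp₀ hpunit
    · rwa [← mul_assoc]
    · exact (hleast r q₀ hr hq₀ (by rwa [mul_assoc])).1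
  · exact eq_one_of_isSuffix_of_least_prefix hq₀ hunit
      (fun r hr hrunit => (hleast p₀ r hp₀ hr hrunit).2) hsq₀ hsunit

end InvertibleWords

/-- In a special monoid `M = ⟨A ∣ w₁ = 1, …, w_k = 1⟩`, let `u₀, v, u₁` be words with `v`
nonempty, and suppose some invertible subword `p * v * q` of `u₀ * v * u₁` contains the
distinguished occurrence of `v` (with `p` a suffix of `u₀` and `q` a prefix of `u₁`).
Then there is a unique smallest such invertible subword `p₀ * v * q₀`; moreover, no
nonempty prefix of `p₀` is invertible and no nonempty suffix of `q₀` is invertible. -/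
theorem min_invertible_subword {A : Type*} [Fintype A] {k : ℕ}
    (w : Fin k → FreeMonoid A)
    (rel : FreeMonoid A → FreeMonoid A → Prop)
    (hrel : ∀ x y, rel x y ↔ ∃ i : Fin k, x = w i ∧ y = 1)
    (u₀ v u₁ : FreeMonoid A) (hv : v ≠ 1)
    (hex : ∃ p q, (∃ α, u₀ = α * p) ∧ (∃ β, u₁ = q * β) ∧
      IsUnit (PresentedMonoid.mk rel (p * v * q))) :
    ∃ p₀ q₀, (∃ α, u₀ = α * p₀) ∧ (∃ β, u₁ = q₀ * β) ∧
      IsUnit (PresentedMonoid.mk rel (p₀ * v * q₀)) ∧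
      (∀ p q, (∃ α, u₀ = α * p) → (∃ β, u₁ = q * β) →
        IsUnit (PresentedMonoid.mk rel (p * v * q)) →
        (∃ α, p = α * p₀) ∧ (∃ β, q = q₀ * β)) ∧
      (∀ p, p ≠ 1 → (∃ β, p₀ = p * β) → ¬ IsUnit (PresentedMonoid.mk rel p)) ∧
      (∀ s, s ≠ 1 → (∃ α, q₀ = α * s) → ¬ IsUnit (PresentedMonoid.mk rel s)) :=
  min_invertible_subword_general (PresentedMonoid.mk rel) u₀ v u₁ hex
end

section
/- Let u, v ∈ FreeMonoid A be nonempty words, and suppose some pair cuts across (u, v). Then there is a least such pair: there exist u₂⁰, v₁⁰ such that (u₂⁰, v₁⁰) cuts across (u, v) and, for every pair (u₂, v₁) cutting across (u, v), u₂⁰ is a suffix of u₂ and v₁⁰ is a prefix of v₁. -/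
/-!
If `(a, b)` and `(c, d)` both cut across `(u, v)`, where `a` is a suffix of `c` and `d` is a prefix
of `b`, then so does `(a, d)`: the word `a * d` is a suffix of the invertible word `c * d` and a
prefix of the invertible word `a * b`, so its image has both a left and a right inverse. Since the
suffixes of `u` and the prefixes of `v` are totally ordered by length, the shortest `a` and the
shortest `d` that occur in any cutting pair therefore form a cutting pair together, and it is the
least one.
-/

theorem isUnit_of_isUnit_mul_of_isUnit_mul_s3 {M : Type*} [Monoid M] {x y z : M}
    (hxz : IsUnit (x * z)) (hzy : IsUnit (z * y)) : IsUnit z := by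
  obtain ⟨s, hs⟩ := hxz.exists_left_inv
  obtain ⟨t, ht⟩ := hzy.exists_right_inv
  exact isUnit_iff_exists_and_exists.2
    ⟨⟨y * t, by rw [← mul_assoc, ht]⟩, ⟨s * x, by rw [mul_assoc, hs]⟩⟩

section Words

variable {A : Type*} {a b u : FreeMonoid A}

theorem toList_isSuffix_toList_iff : a.toList <:+ u.toList ↔ ∃ α, u = α * a :=
  exists_congr fun _ ↦ eq_comm

theorem toList_isPrefix_toList_iff : a.toList <+: u.toList ↔ ∃ β, u = a * β :=
  exists_congr fun _ ↦ eq_comm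

theorem exists_eq_mul_left_of_length_le (ha : ∃ α, u = α * a) (hb : ∃ α, u = α * b)
    (hab : a.length ≤ b.length) : ∃ α, b = α * a := by
  rw [← toList_isSuffix_toList_iff] at ha hb ⊢
  exact List.suffix_of_suffix_length_le ha hb hab

theorem exists_eq_mul_right_of_length_le (ha : ∃ β, u = a * β) (hb : ∃ β, u = b * β)
    (hab : a.length ≤ b.length) : ∃ β, b = a * β := by
  rw [← toList_isPrefix_toList_iff] at ha hb ⊢
  exact List.prefix_of_prefix_length_le ha hb hab

end Words

section CutsAcross

variable {A M : Type*} [Monoid M] {f : FreeMonoid A →* M} {u v a b c d : FreeMonoid A}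

/-- The pair `(a, b)` cuts across `(u, v)`, where a word counts as invertible if its image under
`f` is a unit. For the notion relative to a monoid presentation, take `f` to be the canonical
projection. -/
def CutsAcross (f : FreeMonoid A →* M) (u v a b : FreeMonoid A) : Prop :=
  a ≠ 1 ∧ (∃ α, u = α * a) ∧ b ≠ 1 ∧ (∃ β, v = b * β) ∧ IsUnit (f (a * b))

theorem CutsAcross.exists_eq_mul_left (h : CutsAcross f u v a b) : ∃ α, u = α * a := h.2.1

theorem CutsAcross.exists_eq_mul_right (h : CutsAcross f u v a b) : ∃ β, v = b * β := h.2.2.2.1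

theorem CutsAcross.of_isSuffix_of_isPrefix (hab : CutsAcross f u v a b) (hcd : CutsAcross f u v c d)
    (hac : ∃ α, c = α * a) (hdb : ∃ β, b = d * β) : CutsAcross f u v a d := by
  obtain ⟨α, rfl⟩ := hac
  obtain ⟨β, rfl⟩ := hdb
  obtain ⟨ha, hau, -, -, hab_unit⟩ := hab
  obtain ⟨-, -, hd, hdv, hcd_unit⟩ := hcd
  rw [← mul_assoc, map_mul] at hab_unit
  rw [mul_assoc, map_mul] at hcd_unit
  exact ⟨ha, hau, hd, hdv, isUnit_of_isUnit_mul_of_isUnit_mul_s3 hcd_unit hab_unit⟩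

theorem least_cut_across_general (f : FreeMonoid A →* M) (u v : FreeMonoid A)
    (hex : ∃ u₂ v₁, CutsAcross f u v u₂ v₁) :
    ∃ u₂₀ v₁₀, CutsAcross f u v u₂₀ v₁₀ ∧
      ∀ u₂ v₁, CutsAcross f u v u₂ v₁ → (∃ α, u₂ = α * u₂₀) ∧ ∃ β, v₁ = v₁₀ * β := by
  obtain ⟨a, ha⟩ :=
    exists_minimalFor_of_wellFoundedLT (fun a ↦ ∃ b, CutsAcross f u v a b) FreeMonoid.length hex
  obtain ⟨d, hd⟩ := exists_minimalFor_of_wellFoundedLT (fun d ↦ ∃ c, CutsAcross f u v c d)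
    FreeMonoid.length (exists_comm.1 hex)
  obtain ⟨b, hab⟩ := ha.prop
  obtain ⟨c, hcd⟩ := hd.prop
  have ha_isSuffix {u₂ v₁} (h : CutsAcross f u v u₂ v₁) : ∃ α, u₂ = α * a :=
    exists_eq_mul_left_of_length_le hab.exists_eq_mul_left h.exists_eq_mul_left (ha.le ⟨v₁, h⟩)
  have hd_isPrefix {u₂ v₁} (h : CutsAcross f u v u₂ v₁) : ∃ β, v₁ = d * β :=
    exists_eq_mul_right_of_length_le hcd.exists_eq_mul_right h.exists_eq_mul_right (hd.le ⟨u₂, h⟩)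
  exact ⟨a, d, hab.of_isSuffix_of_isPrefix hcd (ha_isSuffix hcd) (hd_isPrefix hab),
    fun _ _ h ↦ ⟨ha_isSuffix h, hd_isPrefix h⟩⟩

end CutsAcross

/-- In a special monoid `M = ⟨A ∣ w₁ = 1, …, w_k = 1⟩`, if `u, v` are nonempty words and
some pair cuts across `(u, v)` (i.e. some nonempty suffix `u₂` of `u` and nonempty prefix
`v₁` of `v` have `u₂ * v₁` invertible), then there is a least such pair: a pair
`(u₂⁰, v₁⁰)` cutting across `(u, v)` such that for every pair `(u₂, v₁)` cutting across
`(u, v)`, `u₂⁰` is a suffix of `u₂` and `v₁⁰` is a prefix of `v₁`. -/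
theorem least_cut_across {A : Type*} [Fintype A] {k : ℕ}
    (w : Fin k → FreeMonoid A)
    (rel : FreeMonoid A → FreeMonoid A → Prop)
    (hrel : ∀ x y, rel x y ↔ ∃ i : Fin k, x = w i ∧ y = 1)
    (u v : FreeMonoid A) (hu : u ≠ 1) (hv : v ≠ 1)
    (hex : ∃ u₂ v₁ : FreeMonoid A, u₂ ≠ 1 ∧ (∃ α, u = α * u₂) ∧ v₁ ≠ 1 ∧
      (∃ β, v = v₁ * β) ∧ IsUnit (PresentedMonoid.mk rel (u₂ * v₁))) :
    ∃ u₂₀ v₁₀ : FreeMonoid A,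
      (u₂₀ ≠ 1 ∧ (∃ α, u = α * u₂₀) ∧ v₁₀ ≠ 1 ∧ (∃ β, v = v₁₀ * β) ∧
        IsUnit (PresentedMonoid.mk rel (u₂₀ * v₁₀))) ∧
      ∀ u₂ v₁ : FreeMonoid A, u₂ ≠ 1 → (∃ α, u = α * u₂) → v₁ ≠ 1 →
        (∃ β, v = v₁ * β) → IsUnit (PresentedMonoid.mk rel (u₂ * v₁)) →
        (∃ α, u₂ = α * u₂₀) ∧ (∃ β, v₁ = v₁₀ * β) := by
  simpa only [CutsAcross, and_imp] using least_cut_across_general (PresentedMonoid.mk rel) u v hex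
end

section
/- Let μ, γ ∈ FreeMonoid A be nonempty words such that μ * γ is invertible but μ is not invertible. Assume (μ, γ) has height 0, meaning that the only pair cutting across (μ, γ) is (μ, γ) itself. Then for every nonempty prefix p of μ there is no y ∈ M with y * π p = 1 (μ has no nonempty left invertible prefix), and for every nonempty suffix s of γ there is no y ∈ M with π s * y = 1 (γ has no nonempty right invertible suffix). -/
/-!
A factor that has a left inverse and starts a unit also has a right inverse, so it is itself a unit
and can be cancelled from the product. Hence if `μ = p * β` with `p` left invertible, then `β * γ`
is still invertible, and `β ≠ 1` because `μ` is not invertible: `(β, γ)` is a second pair cutting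
across `(μ, γ)`. Symmetrically, a right invertible suffix can be removed from `γ`.
-/

section Monoid

variable {M : Type*} [Monoid M] {a b : M}

theorem isUnit_left_of_isUnit_mul_of_exists_left_inv (hab : IsUnit (a * b))
    (ha : ∃ y, y * a = 1) : IsUnit a := by
  obtain ⟨c, hc⟩ := hab.exists_right_inv
  exact isUnit_iff_exists_and_exists.2 ⟨⟨b * c, by rw [← mul_assoc, hc]⟩, ha⟩

theorem isUnit_right_of_isUnit_mul_of_exists_right_inv (hab : IsUnit (a * b))
    (hb : ∃ y, b * y = 1) : IsUnit b := by
  obtain ⟨c, hc⟩ := hab.exists_left_inv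
  exact isUnit_iff_exists_and_exists.2 ⟨hb, ⟨c * a, by rw [mul_assoc, hc]⟩⟩

end Monoid

/-- `CutsAcross φ u v s t` says that the pair `(s, t)` cuts across `(u, v)`, where an element is
called invertible if its image under `φ` is a unit. For words, `φ` is the projection of a free
monoid onto a presented monoid. -/
structure CutsAcross_s4 {S M : Type*} [Monoid S] [Monoid M] (φ : S →* M) (u v s t : S) : Prop where
  left_ne_one : s ≠ 1
  left_suffix : ∃ α, u = α * s
  right_ne_one : t ≠ 1
  right_prefix : ∃ β, v = t * β
  isUnit_map : IsUnit (φ (s * t))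

/-- The pair `(u, v)` has height `0`: the pairs cutting across it are exactly `(u, v)`. In
particular `(u, v)` cuts across itself, so `u` and `v` are nontrivial and `φ (u * v)` is a unit. -/
def HasHeightZero {S M : Type*} [Monoid S] [Monoid M] (φ : S →* M) (u v : S) : Prop :=
  ∀ s t, CutsAcross_s4 φ u v s t ↔ s = u ∧ t = v

section CutsAcross_s4

variable {S M : Type*} [Monoid S] [Monoid M] {φ : S →* M} {u v s t p q : S}

theorem cutsAcross_self (hu : u ≠ 1) (hv : v ≠ 1) (huv : IsUnit (φ (u * v))) :
    CutsAcross_s4 φ u v u v :=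
  ⟨hu, ⟨1, (one_mul u).symm⟩, hv, ⟨1, (mul_one v).symm⟩, huv⟩

namespace CutsAcross_s4

theorem of_prefix_mul_left (h : CutsAcross_s4 φ u v (p * s) t) (hps : ¬ IsUnit (φ (p * s)))
    (hp : ∃ y, y * φ p = 1) : CutsAcross_s4 φ u v s t := by
  have hmul : IsUnit (φ p * φ (s * t)) := by
    simpa only [map_mul, mul_assoc] using h.isUnit_map
  have hp_unit : IsUnit (φ p) := isUnit_left_of_isUnit_mul_of_exists_left_inv hmul hp
  obtain ⟨α, rfl⟩ := h.left_suffix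
  exact {
    left_ne_one := by
      rintro rfl
      exact hps (by rwa [mul_one])
    left_suffix := ⟨α * p, (mul_assoc α p s).symm⟩
    right_ne_one := h.right_ne_one
    right_prefix := h.right_prefix
    isUnit_map := hp_unit.mul_left_iff.1 hmul }

theorem of_mul_suffix_right (h : CutsAcross_s4 φ u v s (t * q)) (hs : ¬ IsUnit (φ s))
    (hq : ∃ y, φ q * y = 1) : CutsAcross_s4 φ u v s t := by
  have hmul : IsUnit (φ (s * t) * φ q) := by
    simpa only [map_mul, mul_assoc] using h.isUnit_map
  have hq_unit : IsUnit (φ q) := isUnit_right_of_isUnit_mul_of_exists_right_inv hmul hq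
  have hst : IsUnit (φ (s * t)) := hq_unit.mul_right_iff.1 hmul
  obtain ⟨β, rfl⟩ := h.right_prefix
  exact {
    left_ne_one := h.left_ne_one
    left_suffix := h.left_suffix
    right_ne_one := by
      rintro rfl
      exact hs (by rwa [mul_one] at hst)
    right_prefix := ⟨q * β, mul_assoc t q β⟩
    isUnit_map := hst }

end CutsAcross_s4

namespace HasHeightZero

theorem cutsAcross_self (h : HasHeightZero φ u v) : CutsAcross_s4 φ u v u v :=
  (h u v).2 ⟨rfl, rfl⟩

theorem not_exists_left_inv_of_prefix [IsRightCancelMul S] (h : HasHeightZero φ u v)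
    (hu : ¬ IsUnit (φ u)) (hp : p ≠ 1) (hpu : ∃ β, u = p * β) : ¬ ∃ y, y * φ p = 1 := by
  intro hinv
  obtain ⟨β, rfl⟩ := hpu
  have hβ : CutsAcross_s4 φ (p * β) v β v := h.cutsAcross_self.of_prefix_mul_left hu hinv
  exact hp (right_eq_mul.1 ((h β v).1 hβ).1)

theorem not_exists_right_inv_of_suffix [IsLeftCancelMul S] (h : HasHeightZero φ u v)
    (hu : ¬ IsUnit (φ u)) (hq : q ≠ 1) (hqv : ∃ α, v = α * q) : ¬ ∃ y, φ q * y = 1 := by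
  intro hinv
  obtain ⟨α, rfl⟩ := hqv
  have hα : CutsAcross_s4 φ u (α * q) u α := h.cutsAcross_self.of_mul_suffix_right hu hinv
  exact hq (left_eq_mul.1 ((h u α).1 hα).2)

end HasHeightZero

end CutsAcross_s4

theorem height_zero_no_invertible_ends_general {S M : Type*} [CancelMonoid S] [Monoid M]
    {φ : S →* M} {μ γ : S} (hμni : ¬ IsUnit (φ μ)) (hht : HasHeightZero φ μ γ) :
    (∀ p, p ≠ 1 → (∃ β, μ = p * β) → ¬ ∃ y, y * φ p = 1) ∧
    (∀ s, s ≠ 1 → (∃ α, γ = α * s) → ¬ ∃ y, φ s * y = 1) :=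
  ⟨fun _ => hht.not_exists_left_inv_of_prefix hμni,
    fun _ => hht.not_exists_right_inv_of_suffix hμni⟩

/-- In a special monoid `M = ⟨A ∣ w₁ = 1, …, w_k = 1⟩`, let `μ, γ` be nonempty words with
`μ * γ` invertible but `μ` not invertible, and suppose `(μ, γ)` has height `0`, i.e. the
only pair cutting across `(μ, γ)` is `(μ, γ)` itself. Then `μ` has no nonempty left
invertible prefix and `γ` has no nonempty right invertible suffix. -/
theorem height_zero_no_invertible_ends {A : Type*} [Fintype A] {k : ℕ}
    (w : Fin k → FreeMonoid A)
    (rel : FreeMonoid A → FreeMonoid A → Prop)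
    (hrel : ∀ x y, rel x y ↔ ∃ i : Fin k, x = w i ∧ y = 1)
    (μ γ : FreeMonoid A) (hμ : μ ≠ 1) (hγ : γ ≠ 1)
    (hinv : IsUnit (PresentedMonoid.mk rel (μ * γ)))
    (hμni : ¬ IsUnit (PresentedMonoid.mk rel μ))
    (hht : ∀ u₂ v₁ : FreeMonoid A, u₂ ≠ 1 → (∃ α, μ = α * u₂) → v₁ ≠ 1 →
      (∃ β, γ = v₁ * β) → IsUnit (PresentedMonoid.mk rel (u₂ * v₁)) →
      u₂ = μ ∧ v₁ = γ) :
    (∀ p : FreeMonoid A, p ≠ 1 → (∃ β, μ = p * β) →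
      ¬ ∃ y : PresentedMonoid rel, y * PresentedMonoid.mk rel p = 1) ∧
    (∀ s : FreeMonoid A, s ≠ 1 → (∃ α, γ = α * s) →
      ¬ ∃ y : PresentedMonoid rel, PresentedMonoid.mk rel s * y = 1) := by
  refine height_zero_no_invertible_ends_general hμni fun u₂ v₁ => ⟨fun h => ?_, ?_⟩
  · exact hht u₂ v₁ h.left_ne_one h.left_suffix h.right_ne_one h.right_prefix h.isUnit_map
  · rintro ⟨rfl, rfl⟩
    exact cutsAcross_self hμ hγ hinv
end

section
/- Let M be a finitely presented special monoid ⟨A ∣ w₁ = 1, …, w_k = 1⟩ and let N be the submonoid of M × Mᵒᵖ consisting of the pairs (u, v) with u * v = 1 in M. Then N is a finitely generated monoid. -/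
/-!
Let `φ` be the projection of the free monoid onto `M`, and call `(φ u, φ v)` a factor pair of the
word `u * v`. The factor pairs of the relators generate `N`. Indeed, inserting a relator `w` between
`a` and `b` adds to the factor pairs of `a * b` only those that cut `w` itself, and these are
products of `(φ a, φ b)` with factor pairs of `w`. Hence a submonoid `S` of `M × Mᵐᵒᵖ` that contains
all factor pairs of the relators contains those of `a * w * b` exactly when it contains those of
`a * b`: every relation belongs to the syntactic congruence of the set of words all of whose factor
pairs lie in `S`. This set contains the empty word, so it contains every word equal to `1` in `M`.
-/

open Set MulOpposite
open scoped Pointwise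

/-- The syntactic congruence of a set `L`: two elements are related when no two-sided context
separates them with respect to membership in `L`. -/
def syntacticCon {G : Type*} [Semigroup G] (L : Set G) : Con G where
  r x y := ∀ a b, a * x * b ∈ L ↔ a * y * b ∈ L
  iseqv := ⟨fun _ _ _ => Iff.rfl, fun h a b => (h a b).symm, fun h h' a b => (h a b).trans (h' a b)⟩
  mul' {x y z t} hxy hzt a b := calc
    a * (x * z) * b ∈ L ↔ a * x * (z * b) ∈ L := by simp only [mul_assoc]
    _ ↔ a * y * z * b ∈ L := by rw [hxy, mul_assoc (a * y)]
    _ ↔ a * (y * t) * b ∈ L := by rw [hzt, mul_assoc a]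

theorem mem_iff_mem_of_syntacticCon {M : Type*} [Monoid M] {L : Set M} {x y : M}
    (h : syntacticCon L x y) : x ∈ L ↔ y ∈ L := by
  simpa only [one_mul, mul_one] using h 1 1

/-- The submonoid of `M × Mᵐᵒᵖ` of all factorizations `u * v = 1` of the identity of `M`. -/
def oneFactorizations (M : Type*) [Monoid M] : Submonoid (M × Mᵐᵒᵖ) where
  carrier := {p | p.1 * p.2.unop = 1}
  one_mem' := one_mul 1
  mul_mem' {p q} (hp : p.1 * p.2.unop = 1) (hq : q.1 * q.2.unop = 1) := calc
    p.1 * q.1 * (q.2.unop * p.2.unop) = p.1 * (q.1 * q.2.unop) * p.2.unop := by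
      simp only [mul_assoc]
    _ = 1 := by rw [hq, mul_one, hp]

/-- The images in `M × Mᵐᵒᵖ`, under a homomorphism `φ`, of all factorizations `u * v = x`. The
second factor is placed in the opposite monoid because the factorizations of an element with
trivial image are to be elements of `oneFactorizations M`. -/
def factorPairs {F M : Type*} [Monoid F] [Monoid M] (φ : F →* M) (x : F) : Set (M × Mᵐᵒᵖ) :=
  (fun p : F × F => (φ p.1, op (φ p.2))) '' {p | p.1 * p.2 = x}

section Monoid

variable {F M : Type*} [Monoid F] [Monoid M] (φ : F →* M)

theorem mk_mem_factorPairs_mul (u v : F) : (φ u, op (φ v)) ∈ factorPairs φ (u * v) :=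
  ⟨(u, v), rfl, rfl⟩

variable {φ}

theorem factorPairs_subset_oneFactorizations {x : F} (hx : φ x = 1) :
    factorPairs φ x ⊆ oneFactorizations M := by
  rintro _ ⟨⟨u, v⟩, rfl, rfl⟩
  exact (map_mul φ u v).symm.trans hx

end Monoid

section FreeMonoid

theorem freeMonoid_mul_eq_mul_iff {α : Type*} {u v x y : FreeMonoid α} :
    u * v = x * y ↔ (∃ t, x = u * t ∧ v = t * y) ∨ ∃ t, u = x * t ∧ y = t * v :=
  List.append_eq_append_iff

variable {α M : Type*} [Monoid M] (φ : FreeMonoid α →* M)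

theorem finite_factorPairs (x : FreeMonoid α) : (factorPairs φ x).Finite := by
  refine Set.Finite.image _ (((x.toList.inits.zip x.toList.tails).finite_toSet).subset ?_)
  rintro ⟨u, v⟩ huv
  exact List.mem_zip_inits_tails.2 huv

theorem factorPairs_one : factorPairs φ 1 = {1} := by
  ext p
  constructor
  · rintro ⟨⟨u, v⟩, huv, rfl⟩
    obtain ⟨rfl, rfl⟩ : u = 1 ∧ v = 1 := List.append_eq_nil_iff.1 huv
    simp only [map_one, op_one, Prod.mk_one_one, mem_singleton_iff]
  · rintro rfl
    exact ⟨1, one_mul 1, by simp⟩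

theorem factorPairs_mul (x y : FreeMonoid α) :
    factorPairs φ (x * y) =
      ((1 : M), op (φ y)) • factorPairs φ x ∪ (φ x, (1 : Mᵐᵒᵖ)) • factorPairs φ y := by
  ext p
  constructor
  · rintro ⟨⟨u, v⟩, huv, rfl⟩
    obtain ⟨t, rfl, rfl⟩ | ⟨t, rfl, rfl⟩ := freeMonoid_mul_eq_mul_iff.1 huv
    · exact Or.inl ⟨_, mk_mem_factorPairs_mul φ u t,
        Prod.ext (one_mul _) (congrArg op (map_mul φ t y).symm)⟩
    · exact Or.inr ⟨_, mk_mem_factorPairs_mul φ t v,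
        Prod.ext (map_mul φ x t).symm (one_mul _)⟩
  · rintro (⟨_, ⟨⟨u, v⟩, rfl, rfl⟩, rfl⟩ | ⟨_, ⟨⟨u, v⟩, rfl, rfl⟩, rfl⟩)
    · exact ⟨(u, v * y), (mul_assoc u v y).symm, by simp⟩
    · exact ⟨(x * u, v), mul_assoc x u v, by simp⟩

variable {φ}

theorem factorPairs_mul_mul_of_map_eq_one {w : FreeMonoid α} (hw : φ w = 1)
    (a b : FreeMonoid α) :
    factorPairs φ (a * w * b) = factorPairs φ (a * b) ∪ (φ a, op (φ b)) • factorPairs φ w := by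
  simp only [factorPairs_mul, smul_set_union, smul_smul, map_mul, hw, Prod.mk_mul_mk, mul_one,
    one_mul, op_one, Prod.mk_one_one, one_smul, union_right_comm]

theorem factorPairs_mul_mul_subset_iff {S : Submonoid (M × Mᵐᵒᵖ)} {w : FreeMonoid α}
    (hw : φ w = 1) (hwS : factorPairs φ w ⊆ S) (a b : FreeMonoid α) :
    factorPairs φ (a * w * b) ⊆ S ↔ factorPairs φ (a * b) ⊆ S := by
  rw [factorPairs_mul_mul_of_map_eq_one hw, union_subset_iff, and_iff_left_iff_imp]
  rintro hab _ ⟨p, hp, rfl⟩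
  exact S.mul_mem (hab (mk_mem_factorPairs_mul φ a b)) (hwS hp)

theorem factorPairs_subset_of_conGen_one {rel : FreeMonoid α → FreeMonoid α → Prop}
    {S : Submonoid (M × Mᵐᵒᵖ)} (hspecial : ∀ x y, rel x y → y = 1)
    (hφ : ∀ w, rel w 1 → φ w = 1) (hS : ∀ w, rel w 1 → factorPairs φ w ⊆ S)
    {x : FreeMonoid α} (hx : conGen rel x 1) : factorPairs φ x ⊆ S := by
  have hle : conGen rel ≤ syntacticCon {x | factorPairs φ x ⊆ S} := by
    refine Con.conGen_le.2 fun w y hwy a b => ?_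
    obtain rfl := hspecial w y hwy
    rw [mul_one]
    exact factorPairs_mul_mul_subset_iff (hφ w hwy) (hS w hwy) a b
  have hone : factorPairs φ 1 ⊆ S := by
    rw [factorPairs_one, singleton_subset_iff]
    exact S.one_mem
  exact (mem_iff_mem_of_syntacticCon (hle hx)).2 hone

end FreeMonoid

section SpecialMonoid

variable {α : Type*} {rel : FreeMonoid α → FreeMonoid α → Prop}

theorem closure_factorPairs_relators (hspecial : ∀ x y, rel x y → y = 1) :
    Submonoid.closure (⋃ x ∈ {x | rel x 1}, factorPairs (PresentedMonoid.mk rel) x) =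
      oneFactorizations (PresentedMonoid rel) := by
  refine le_antisymm (Submonoid.closure_le.2 (iUnion₂_subset fun x hx =>
    factorPairs_subset_oneFactorizations (PresentedMonoid.mk_eq_mk_of_rel hx))) ?_
  rintro ⟨p, q⟩ (hpq : p * q.unop = 1)
  obtain ⟨u, rfl⟩ := PresentedMonoid.surjective_mk p
  obtain ⟨v, hv⟩ := PresentedMonoid.surjective_mk q.unop
  obtain rfl : op (PresentedMonoid.mk rel v) = q := congrArg op hv
  have huv : conGen rel (u * v) 1 := PresentedMonoid.mk_eq_mk_iff.1 hpq
  exact factorPairs_subset_of_conGen_one hspecial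
    (fun w hw => PresentedMonoid.mk_eq_mk_of_rel hw)
    (fun w hw => (subset_iUnion₂ (s := fun w (_ : rel w 1) => factorPairs _ w) w hw).trans
      Submonoid.subset_closure)
    huv (mk_mem_factorPairs_mul (PresentedMonoid.mk rel) u v)

theorem special_monoid_N_fg_general (hspecial : ∀ x y, rel x y → y = 1)
    (hfinite : {x | rel x 1}.Finite) : Monoid.FG (oneFactorizations (PresentedMonoid rel)) := by
  rw [Monoid.fg_iff_submonoid_fg, Submonoid.fg_iff]
  exact ⟨_, closure_factorPairs_relators hspecial,
    hfinite.biUnion fun x _ => finite_factorPairs _ x⟩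

end SpecialMonoid

/-- Let `M = ⟨A ∣ w₁ = 1, …, w_k = 1⟩` be a finitely presented special monoid and let `N`
be the submonoid of `M × Mᵐᵒᵖ` consisting of the pairs `(u, v)` with `u * v = 1` in `M`.
Then `N` is a finitely generated monoid. -/
theorem special_monoid_N_fg {A : Type*} [Fintype A] {k : ℕ}
    (w : Fin k → FreeMonoid A)
    (rel : FreeMonoid A → FreeMonoid A → Prop)
    (hrel : ∀ x y, rel x y ↔ ∃ i : Fin k, x = w i ∧ y = 1)
    (N : Submonoid (PresentedMonoid rel × (PresentedMonoid rel)ᵐᵒᵖ))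
    (hN : ∀ p : PresentedMonoid rel × (PresentedMonoid rel)ᵐᵒᵖ,
      p ∈ N ↔ p.1 * p.2.unop = 1) :
    Monoid.FG N := by
  obtain rfl : N = oneFactorizations _ := Submonoid.ext hN
  exact special_monoid_N_fg_general (fun x y h => ((hrel x y).1 h).choose_spec.2)
    ((finite_range w).subset fun x hx => ((hrel x 1).1 hx).imp fun _ h => h.1.symm)
end

section
/- Let N be a cancellative monoid, let G be a subgroup of the group of units of N (whose elements are identified with elements of N), and let X ⊆ N. Assume: (a) N is generated as a monoid by the union of (the image of) G and X; (b) A is a set with a right N-action such that the subsets A·x := {a·x : a ∈ A} for x ∈ X are pairwise disjoint; (c) letting A₀ := A \ ⋃_{x ∈ X} A·x, for every x ∈ X and every g ∈ G with g ≠ 1 one has A·x·g ⊆ A₀; and (d) A·x ≠ A for every x ∈ X. Then the canonical monoid homomorphism from the monoid coproduct (free product) G ∗ FreeMonoid X to N, induced by the inclusion of G into N and the inclusion map X → N, is bijective. In particular, the submonoid of N generated by X is a free monoid with basis X, and N is isomorphic to the free product G ∗ X*. -/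
/-!
Every element of `G ∗ X*` other than an element of `G` has the form `u x g` with `x ∈ X` and
`g ∈ G`, so the canonical map is injective as soon as the image of such a product lies outside `G`
and determines `x` and `g`: cancelling `x g` on the right then reduces to a shorter word.
A relation `m x g = n y` applied to any point of `A` shows that `A·x·g` meets `A·y`, which forces
`g = 1` and `x = y`. A relation `n x = g` would give `x` a left inverse, whence `A·x = A`.
-/

section Coprod

open Function Monoid.Coprod

variable {M N X : Type*}

@[elab_as_elim]
theorem coprod_freeMonoid_induction [Monoid M]
    {p : Monoid.Coprod M (FreeMonoid X) → Prop} (w : Monoid.Coprod M (FreeMonoid X))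
    (of_inl : ∀ m, p (inl m))
    (mul_inr_mul_inl : ∀ u x m, p u → p (u * inr (FreeMonoid.of x) * inl m)) :
    p w := by
  -- Quantifying over trailing letters `k ∈ M` makes the property multiplicative in `w`.
  have extend : ∀ u, (∀ k, p (u * inl k)) → ∀ k, p (u * w * inl k) := by
    induction w using Monoid.Coprod.induction_on with
    | inl m =>
      intro u hu k
      simpa only [mul_assoc, map_mul] using hu (m * k)
    | inr l =>
      induction l using FreeMonoid.inductionOn with
      | one => simp
      | of x =>
        intro u hu k
        exact mul_inr_mul_inl u x k (by simpa using hu 1)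
      | mul l₁ l₂ ih₁ ih₂ =>
        intro u hu
        simpa only [map_mul, mul_assoc] using ih₂ _ (ih₁ u hu)
    | mul v₁ v₂ ih₁ ih₂ =>
      intro u hu
      simpa only [mul_assoc] using ih₂ _ (ih₁ u hu)
  simpa using extend 1 (by simpa using of_inl) 1

theorem mrange_coprod_lift_freeMonoid_lift [Monoid M] [Monoid N] (f : M →* N) (ι : X → N) :
    MonoidHom.mrange (lift f (FreeMonoid.lift ι)) =
      Submonoid.closure (Set.range f ∪ Set.range ι) := by
  rw [mrange_lift, FreeMonoid.mrange_lift, Submonoid.closure_union, ← MonoidHom.coe_mrange,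
    Submonoid.closure_eq]

theorem coprod_lift_freeMonoid_lift_injective [Group M] [Monoid N] {f : M →* N} {ι : X → N}
    (hf : Injective f) (hreg : ∀ x, IsRightRegular (ι x)) (hne : ∀ n x g, n * ι x ≠ f g)
    (hlast : ∀ m n x y g, m * ι x * f g = n * ι y → g = 1 ∧ x = y) :
    Injective (lift f (FreeMonoid.lift ι)) := by
  have mul_map_mul_inv {m n : N} {g h : M} (e : m * f g = n * f h) : m * f (g * h⁻¹) = n := by
    rw [map_mul, ← mul_assoc, e, mul_assoc, ← map_mul, mul_inv_cancel, map_one, mul_one]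
  have mul_map_ne_map (n x g h) : n * ι x * f g ≠ f h := fun e =>
    hne n x (h * g⁻¹) (by simpa using (mul_map_mul_inv (m := 1) (by simpa using e.symm)).symm)
  intro u
  induction u using coprod_freeMonoid_induction with
  | of_inl g =>
    intro v huv
    induction v using coprod_freeMonoid_induction with
    | of_inl h => exact congrArg inl (hf (by simpa using huv))
    | mul_inr_mul_inl v y h => exact absurd (by simpa using huv.symm) (mul_map_ne_map _ y h g)
  | mul_inr_mul_inl u x g ih =>
    intro v huv
    induction v using coprod_freeMonoid_induction with
    | of_inl h => exact absurd (by simpa using huv) (mul_map_ne_map _ x g h)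
    | mul_inr_mul_inl v y h =>
      simp only [map_mul, lift_apply_inl, lift_apply_inr, FreeMonoid.lift_eval_of] at huv
      obtain ⟨hgh, rfl⟩ := hlast _ _ _ _ _ (mul_map_mul_inv huv)
      obtain rfl : g = h := mul_inv_eq_one.mp hgh
      rw [ih (hreg x (by simpa using mul_map_mul_inv huv))]

end Coprod

section PingPong

open Function Monoid.Coprod MulOpposite
open scoped RightActions

variable {N A : Type*} [Monoid N] [MulAction Nᵐᵒᵖ A]

theorem range_op_smul_eq_univ_of_mul_eq_one {m n : N} (h : m * n = 1) :
    (Set.range fun a : A => a <• n) = Set.univ :=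
  Set.range_eq_univ.mpr fun a => ⟨a <• m, by simp only [← op_smul_mul, h, op_one, one_smul]⟩

variable {G X : Type*} [Group G] {f : G →* N} {ι : X → N}

theorem mul_ne_map_of_range_op_smul_ne_univ {x : N}
    (hx : (Set.range fun a : A => a <• x) ≠ Set.univ) (n : N) (g : G) : n * x ≠ f g := by
  intro e
  refine hx (range_op_smul_eq_univ_of_mul_eq_one (m := f g⁻¹ * n) ?_)
  rw [mul_assoc, e, ← map_mul, inv_mul_cancel, map_one]

theorem eq_one_and_eq_of_mul_map_eq_of_ping_pong [Nonempty A]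
    (hdisj : Pairwise (Disjoint on fun x => Set.range fun a : A => a <• ι x))
    (hping : ∀ x y g, g ≠ 1 → ∀ a : A, a <• ι x <• f g ∉ Set.range fun b : A => b <• ι y)
    {m n : N} {x y : X} {g : G} (h : m * ι x * f g = n * ι y) : g = 1 ∧ x = y := by
  obtain ⟨a⟩ := ‹Nonempty A›
  have meet : a <• m <• ι x <• f g = a <• n <• ι y := by simp only [← op_smul_mul, h]
  obtain rfl : g = 1 := by
    by_contra hg
    exact hping x y g hg (a <• m) ⟨a <• n, meet.symm⟩
  refine ⟨rfl, hdisj.eq (Set.not_disjoint_iff.mpr ⟨_, ⟨a <• m, rfl⟩, a <• n, ?_⟩)⟩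
  simpa using meet.symm

theorem ping_pong_coprod_general (hf : Injective f) (hreg : ∀ x, IsRightRegular (ι x))
    (hgen : Submonoid.closure (Set.range f ∪ Set.range ι) = ⊤)
    (hdisj : Pairwise (Disjoint on fun x => Set.range fun a : A => a <• ι x))
    (hping : ∀ x y g, g ≠ 1 → ∀ a : A, a <• ι x <• f g ∉ Set.range fun b : A => b <• ι y)
    (hproper : ∀ x, (Set.range fun a : A => a <• ι x) ≠ Set.univ) :
    Bijective (lift f (FreeMonoid.lift ι)) := by
  constructor
  · refine coprod_lift_freeMonoid_lift_injective hf hreg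
      (fun n x => mul_ne_map_of_range_op_smul_ne_univ (hproper x) n) fun m n x y g h => ?_
    have : Nonempty A := (Set.nonempty_compl.mpr (hproper x)).to_type
    exact eq_one_and_eq_of_mul_map_eq_of_ping_pong hdisj hping h
  · rw [← MonoidHom.mrange_eq_top, mrange_coprod_lift_freeMonoid_lift, hgen]

end PingPong

open MulOpposite in
/-- Ping Pong Lemma: let `N` be a cancellative monoid, `G` a subgroup of the group of
units of `N` and `X ⊆ N` with `N` generated by `G ∪ X`.  Suppose `N` acts on the right
of a set `A` (i.e. `Nᵐᵒᵖ` acts on `A`) in such a way that the sets `A·x` (`x ∈ X`) are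
pairwise disjoint, `A·x·g` lies in the complement `A₀` of `⋃_{x ∈ X} A·x` whenever
`x ∈ X` and `1 ≠ g ∈ G`, and `A·x ≠ A` for all `x ∈ X`.  Then the canonical
homomorphism `G ∗ X* → N` is bijective; in particular `⟨X⟩` is a free monoid with basis
`X` and `N ≅ G ∗ X*`. -/
theorem ping_pong_coprod {N : Type*} [CancelMonoid N] (G : Subgroup Nˣ) (X : Set N)
    {A : Type*} [MulAction Nᵐᵒᵖ A]
    (hgen : Submonoid.closure ((fun g : Nˣ => (g : N)) '' (G : Set Nˣ) ∪ X) = ⊤)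
    (hdisj : X.PairwiseDisjoint fun x : N => Set.range fun a : A => op x • a)
    (hping : ∀ x ∈ X, ∀ g ∈ G, g ≠ 1 → ∀ a : A,
      op ((g : Nˣ) : N) • (op x • a) ∈
        Set.univ \ ⋃ y ∈ X, Set.range fun a : A => op y • a)
    (hproper : ∀ x ∈ X, (Set.range fun a : A => op x • a) ≠ Set.univ) :
    Function.Bijective
      (Monoid.Coprod.lift ((Units.coeHom N).comp G.subtype)
        (FreeMonoid.lift fun x : X => (x : N))) := by
  refine ping_pong_coprod_general (Units.val_injective.comp G.subtype_injective)
    (fun x => IsRightRegular.all (x : N)) ?_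
    (fun x y hxy => hdisj x.2 y.2 (Subtype.coe_ne_coe.mpr hxy))
    (fun x y g hg a hmem => ?_) fun x => hproper x x.2
  · rw [MonoidHom.coe_comp, Set.range_comp, Subgroup.coe_subtype, Subtype.range_coe,
      Subtype.range_coe]
    exact hgen
  · exact (hping x x.2 g g.2 (by simpa using hg) a).2 (Set.mem_biUnion y.2 hmem)
end

section
/- Let M be a finitely presented special monoid ⟨A ∣ w₁ = 1, …, w_k = 1⟩, let G = Mˣ be its group of units, and let N be the submonoid of M × Mᵒᵖ consisting of the pairs (u, v) with u * v = 1 in M. Then N is isomorphic, as a monoid, to the free product of G with a free monoid of finite rank: there exists n : ℕ such that N ≃* Monoid.Coprod Mˣ (FreeMonoid (Fin n)). -/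
/-!
The monoid `N` of the theorem is `RightUnit M`, and the proof exhibits normal forms in it through
a homomorphism `N →* Mˣ * F`, with `F` the free monoid on *all* of `N`. Fix `(u, v) ∈ N` and a
word for `u`. A suffix of that word whose value has a right inverse `v'` dividing `v` on the left
determines a right factor of `(u, v)`, so these suffixes cut `(u, v)` into syllables. In a special
monoid the right inverses dividing a common element form a chain, which makes the syllables well
defined. Inserting a relator into the word does not change their product, because the unit
syllables that it contributes telescope. Hence the product depends on `(u, v)` only, and it is
multiplicative in `(u, v)`. It is `g` at `(g, g⁻¹)`, and every syllable is its own factorization,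
so `N` is the free product of `Mˣ` with the free monoid on the nonunit syllables.

There are finitely many of these because `N` is finitely generated: `(u, v)` is a product of pairs
of halves of relators, by induction on a derivation of `u * v = 1`.
-/

open Monoid (Coprod)
open FreeMonoid (of)

/-- A right-invertible element `val` of a monoid together with a chosen right inverse `inv`.
These pairs form the monoid `N` of the theorem; `inv` is kept in `M` rather than `Mᵐᵒᵖ`, the
reversal being built into the multiplication. -/
@[ext]
structure RightUnit (M : Type*) [Monoid M] where
  val : M
  inv : M
  val_mul_inv : val * inv = 1

namespace RightUnit

variable {M : Type*} [Monoid M]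

attribute [simp] val_mul_inv

@[simp]
theorem val_mul_inv_mul (p : RightUnit M) (x : M) : p.val * (p.inv * x) = x := by
  rw [← mul_assoc, p.val_mul_inv, one_mul]

instance : Monoid (RightUnit M) where
  mul p q := ⟨p.val * q.val, q.inv * p.inv, by simp [mul_assoc]⟩
  one := ⟨1, 1, one_mul 1⟩
  mul_assoc _ _ _ := RightUnit.ext (mul_assoc _ _ _) (mul_assoc _ _ _).symm
  one_mul _ := RightUnit.ext (one_mul _) (mul_one _)
  mul_one _ := RightUnit.ext (mul_one _) (one_mul _)

@[simp] theorem val_one : (1 : RightUnit M).val = 1 := rfl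
@[simp] theorem inv_one : (1 : RightUnit M).inv = 1 := rfl
@[simp] theorem val_mul (p q : RightUnit M) : (p * q).val = p.val * q.val := rfl
@[simp] theorem inv_mul (p q : RightUnit M) : (p * q).inv = q.inv * p.inv := rfl

theorem inv_mul_left_cancel (p : RightUnit M) {x y : M} (h : p.inv * x = p.inv * y) : x = y := by
  simpa using congrArg (p.val * ·) h

theorem mul_val_right_cancel (p : RightUnit M) {x y : M} (h : x * p.val = y * p.val) : x = y := by
  simpa [mul_assoc] using congrArg (· * p.inv) h

instance : IsRightCancelMul (RightUnit M) where
  mul_right_cancel p _ _ h :=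
    RightUnit.ext (p.mul_val_right_cancel (congrArg val h))
      (p.inv_mul_left_cancel (congrArg inv h))

/-- The embedding of the group of units, `g ↦ (g, g⁻¹)`. -/
@[simps]
def ofUnits : Mˣ →* RightUnit M where
  toFun g := ⟨g, ↑g⁻¹, g.mul_inv⟩
  map_one' := RightUnit.ext rfl (by simp)
  map_mul' g h := RightUnit.ext rfl (by simp)

theorem eq_ofUnits_of_val_eq {p : RightUnit M} {g : Mˣ} (h : p.val = g) : p = ofUnits g :=
  RightUnit.ext h (Units.eq_inv_of_mul_eq_one_left (h ▸ p.val_mul_inv))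

theorem isUnit_of_val_eq_mul {p : RightUnit M} {l x y : M} (hl : l * x = 1)
    (hp : p.val = x * y) : IsUnit x :=
  isUnit_iff_exists_and_exists.2 ⟨⟨y * p.inv, by rw [← mul_assoc, ← hp, p.val_mul_inv]⟩, l, hl⟩

theorem isUnit_of_mul_mul_eq_inv {p : RightUnit M} {s t x : M} {g : Mˣ} (hst : s * t = 1)
    (hp : x * s * g = p.inv) : IsUnit s := by
  have h : p.val * x * s * g = 1 := by rw [mul_assoc p.val, mul_assoc, hp, p.val_mul_inv]
  refine isUnit_iff_exists_and_exists.2 ⟨⟨t, hst⟩, g * (p.val * x), ?_⟩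
  rw [mul_assoc, Units.mul_eq_one_iff_eq_inv.1 h, Units.mul_inv]

/-- A submonoid of `M × Mᵐᵒᵖ` consisting of all pairs `(u, v)` with `u * v = 1` is `RightUnit M`. -/
def mulEquivOfMemIff (N : Submonoid (M × Mᵐᵒᵖ)) (hN : ∀ p, p ∈ N ↔ p.1 * p.2.unop = 1) :
    N ≃* RightUnit M where
  toFun p := ⟨p.1.1, p.1.2.unop, (hN _).1 p.2⟩
  invFun q := ⟨(q.val, .op q.inv), (hN _).2 q.val_mul_inv⟩
  left_inv _ := rfl
  right_inv _ := rfl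
  map_mul' _ _ := rfl

/-- The free product of the group of units of `M` with the free monoid on *all* right units. -/
abbrev Syllables (M : Type*) [Monoid M] : Type _ := Coprod Mˣ (FreeMonoid (RightUnit M))

open Classical in
/-- A right unit as a one-letter element of the free product, the letter being taken in the
group of units whenever possible. -/
noncomputable def syllable (p : RightUnit M) : Syllables M :=
  if h : IsUnit p.val then .inl h.unit else .inr (of p)

/-- The multiplication map from the free product back to right units. -/
def eval : Syllables M →* RightUnit M := Coprod.lift ofUnits (FreeMonoid.lift id)

@[simp]
theorem syllable_ofUnits (g : Mˣ) : syllable (ofUnits g) = .inl g := by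
  rw [syllable, dif_pos (by simp)]
  exact congrArg Coprod.inl (Units.ext rfl)

@[simp]
theorem syllable_one : syllable (1 : RightUnit M) = 1 := by
  rw [← map_one ofUnits, syllable_ofUnits, map_one]

@[simp]
theorem eval_inl (g : Mˣ) : eval (.inl g) = ofUnits g := Coprod.lift_apply_inl ..

@[simp]
theorem eval_syllable (p : RightUnit M) : eval (syllable p) = p := by
  rw [syllable]
  split_ifs with h
  · rw [eval_inl, ← eq_ofUnits_of_val_eq h.unit_spec.symm]
  · rw [eval, Coprod.lift_apply_inr, FreeMonoid.lift_eval_of, id]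

end RightUnit

/-- Levi's property for chosen right inverses: those dividing a common element form a chain under
left divisibility. -/
def HasRigidRightUnits (M : Type*) [Monoid M] : Prop :=
  ∀ ⦃p q : RightUnit M⦄ ⦃b : M⦄, p.inv ∣ b → q.inv ∣ b → p.inv ∣ q.inv ∨ q.inv ∣ p.inv

namespace HasRigidRightUnits

variable {M : Type*} [Monoid M] {b x : M} {p q : RightUnit M}

theorem exists_mul_eq (hM : HasRigidRightUnits M) (hp : p.inv ∣ b) (hq : q.inv ∣ b)
    (h : p.val = x * q.val) : ∃ c : RightUnit M, c * q = p := by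
  refine ⟨⟨x, q.val * p.inv, by rw [← mul_assoc, ← h, p.val_mul_inv]⟩,
    RightUnit.ext h.symm ?_⟩
  change q.inv * (q.val * p.inv) = p.inv
  rcases hM hp hq with ⟨t, ht⟩ | ⟨t, ht⟩
  · have hx : x = t := by
      calc x = x * q.val * q.inv := by rw [mul_assoc, q.val_mul_inv, mul_one]
        _ = t := by rw [← h, ht, p.val_mul_inv_mul]
    rw [ht, ← hx, mul_assoc, ← mul_assoc x, ← h, p.val_mul_inv, mul_one]
  · rw [ht, q.val_mul_inv_mul]

theorem eq_of_val_eq (hM : HasRigidRightUnits M) (hp : p.inv ∣ b) (hq : q.inv ∣ b)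
    (h : p.val = q.val) : p = q := by
  obtain ⟨c, rfl⟩ := hM.exists_mul_eq hp hq (x := 1) (by rw [h, one_mul])
  have hc : c.val = (1 : Mˣ) := q.mul_val_right_cancel (by simpa using h)
  rw [RightUnit.eq_ofUnits_of_val_eq hc, map_one, one_mul]

theorem inv_dvd_of_inv_dvd_mul (hM : HasRigidRightUnits M) {u c : M} (h : u * p.val * b = 1)
    (hp : p.inv ∣ b * c) : p.inv ∣ b := by
  obtain ⟨d, hd⟩ := hM.exists_mul_eq (p := ⟨u * p.val, b, h⟩) (dvd_mul_right b c) hp rfl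
  exact ⟨d.inv, (congrArg RightUnit.inv hd).symm⟩

end HasRigidRightUnits

namespace RightUnit

variable {A M : Type*} [Monoid M] (π : FreeMonoid A →* M)

open Classical in
/-- The right unit `c` for which `c * n` has value `m` and inverse dividing `b`; the junk value `1`
if there is none. -/
noncomputable def nextFactor (b m : M) (n : RightUnit M) : RightUnit M :=
  if h : ∃ c : RightUnit M, (c * n).inv ∣ b ∧ (c * n).val = m then h.choose else 1

/-- For `p.val = π s` and `p.inv = b`, the right factors of `p` carried by suffixes of the word `s`
cut `p` into right units; `parse π b s` is the product of the corresponding syllables. The suffixes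
are scanned from the right, and a suffix `t` gives a factor if some right inverse of `π t`
divides `b`. -/
noncomputable def parse (b : M) (s : FreeMonoid A) : Syllables M :=
  s.recOn 1 fun a t k => syllable (nextFactor b (π (of a * t)) (eval k)) * k

variable {π} {b m : M} {n p : RightUnit M} {a : A} {s : FreeMonoid A}

theorem nextFactor_eq (hM : HasRigidRightUnits M) {c : RightUnit M} (hc : (c * n).inv ∣ b)
    (hm : (c * n).val = m) : nextFactor b m n = c := by
  have h : ∃ c : RightUnit M, (c * n).inv ∣ b ∧ (c * n).val = m := ⟨c, hc, hm⟩
  rw [nextFactor, dif_pos h]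
  exact mul_right_cancel
    (hM.eq_of_val_eq h.choose_spec.1 hc (h.choose_spec.2.trans hm.symm))

theorem nextFactor_of_forall_ne (h : ∀ p : RightUnit M, p.inv ∣ b → p.val ≠ m) :
    nextFactor b m n = 1 :=
  dif_neg fun ⟨_, hc, hm⟩ => h _ hc hm

theorem nextFactor_eq_one_or (b m : M) (n : RightUnit M) : nextFactor b m n = 1 ∨
    (nextFactor b m n * n).inv ∣ b ∧ (nextFactor b m n * n).val = m := by
  rw [nextFactor]
  split_ifs with h
  exacts [.inr h.choose_spec, .inl rfl]

theorem nextFactor_congr {b' m' : M} {n' : RightUnit M}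
    (h : ∀ c : RightUnit M, (c * n).inv ∣ b ∧ (c * n).val = m ↔
      (c * n').inv ∣ b' ∧ (c * n').val = m') : nextFactor b m n = nextFactor b' m' n' := by
  classical
  exact congrArg (fun P : RightUnit M → Prop => if h : ∃ c, P c then h.choose else 1)
    (funext fun c => propext (h c))

@[simp]
theorem parse_one : parse π b 1 = 1 := rfl

theorem parse_of_mul (b : M) (a : A) (s : FreeMonoid A) : parse π b (of a * s) =
    syllable (nextFactor b (π (of a * s)) (eval (parse π b s))) * parse π b s := rfl

theorem eval_parse_of_mul (b : M) (a : A) (s : FreeMonoid A) : eval (parse π b (of a * s)) =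
    nextFactor b (π (of a * s)) (eval (parse π b s)) * eval (parse π b s) := by
  rw [parse_of_mul, map_mul, eval_syllable]

theorem inv_eval_parse_dvd (b : M) (s : FreeMonoid A) : (eval (parse π b s)).inv ∣ b := by
  induction s using FreeMonoid.inductionOn' with
  | one => simp
  | of_mul a s ih =>
    rw [eval_parse_of_mul]
    rcases nextFactor_eq_one_or b (π (of a * s)) (eval (parse π b s)) with h | h
    · rwa [h, one_mul]
    · exact h.1

theorem exists_map_eq_mul_val_eval_parse (b : M) (s : FreeMonoid A) :
    ∃ x, π s = x * (eval (parse π b s)).val := by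
  induction s using FreeMonoid.inductionOn' with
  | one => exact ⟨1, by simp⟩
  | of_mul a s ih =>
    obtain ⟨x, hx⟩ := ih
    rw [eval_parse_of_mul]
    rcases nextFactor_eq_one_or b (π (of a * s)) (eval (parse π b s)) with h | h
    · exact ⟨π (of a) * x, by rw [h, one_mul, map_mul, hx, mul_assoc]⟩
    · exact ⟨1, by rw [h.2, one_mul]⟩

theorem parse_of_mul_of_forall_ne
    (h : ∀ p : RightUnit M, p.inv ∣ b → p.val ≠ π (of a * s)) :
    parse π b (of a * s) = parse π b s := by
  rw [parse_of_mul, nextFactor_of_forall_ne h, syllable_one, one_mul]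

theorem parse_mul_of_forall_ne {z q : FreeMonoid A}
    (hz : ∀ p : RightUnit M, p.inv ∣ b → p.val ≠ π z) {l : M} (hl : l * π q = 1) :
    parse π b (q * z) = parse π b z := by
  induction q using FreeMonoid.inductionOn' generalizing l with
  | one => rw [one_mul]
  | of_mul a q ih =>
    rw [mul_assoc, parse_of_mul_of_forall_ne,
      ih (l := l * π (of a)) (by rw [mul_assoc, ← map_mul, hl])]
    intro r hrb hr
    rw [← mul_assoc, map_mul] at hr
    obtain ⟨g, hg⟩ := isUnit_of_val_eq_mul hl hr
    exact hz (ofUnits g⁻¹ * r) (Units.mul_right_dvd.2 hrb) (by simp [hr, ← hg])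

section Rigid

variable (hM : HasRigidRightUnits M)

include hM

theorem exists_parse_of_mul_eq (hp : p.inv ∣ b) (hps : p.val = π (of a * s)) :
    ∃ c : RightUnit M, c * eval (parse π b s) = p ∧
      parse π b (of a * s) = syllable c * parse π b s := by
  obtain ⟨x, hx⟩ := exists_map_eq_mul_val_eval_parse (π := π) b s
  obtain ⟨c, hc⟩ := hM.exists_mul_eq hp (inv_eval_parse_dvd b s) (x := π (of a) * x)
    (by rw [hps, map_mul, hx, mul_assoc])
  exact ⟨c, hc, by rw [parse_of_mul, nextFactor_eq hM (hc ▸ hp) (hc ▸ hps)]⟩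

theorem eval_parse (hp : p.inv ∣ b) (hps : p.val = π s) : eval (parse π b s) = p := by
  cases s using FreeMonoid.casesOn with
  | one => exact (hM.eq_of_val_eq hp (q := 1) (one_dvd b) (by simpa using hps)).symm
  | of_mul a s =>
    obtain ⟨c, rfl, hc⟩ := exists_parse_of_mul_eq hM hp hps
    rw [hc, map_mul, eval_syllable]

theorem parse_mul_right {u : M} (h : u * π s * b = 1) (c : M) :
    parse π (b * c) s = parse π b s := by
  induction s using FreeMonoid.inductionOn' generalizing u with
  | one => rfl
  | of_mul a s ih =>
    have hs : u * π (of a) * π s * b = 1 := by rwa [mul_assoc u, ← map_mul]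
    rw [parse_of_mul, parse_of_mul, ih hs]
    congr 2
    refine nextFactor_congr fun d => and_congr_left fun hd => ⟨fun hdvd => ?_, (·.mul_right c)⟩
    exact hM.inv_dvd_of_inv_dvd_mul (hd ▸ h) hdvd

theorem parse_inv_mul {r : RightUnit M} {t : FreeMonoid A} (hr : r.val = π t) (b : M)
    (s : FreeMonoid A) : parse π (r.inv * b) (s * t) = parse π b s * parse π r.inv t := by
  induction s using FreeMonoid.inductionOn' with
  | one => rw [parse_one, one_mul, one_mul, parse_mul_right hM (u := 1) (by simp [← hr])]
  | of_mul a s ih =>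
    rw [mul_assoc, parse_of_mul, parse_of_mul, ih, map_mul eval, eval_parse hM dvd_rfl hr,
      ← mul_assoc (of a), map_mul π _ t, ← hr, ← mul_assoc (syllable _)]
    congr 3
    refine nextFactor_congr fun c => and_congr ?_ ?_
    · rw [← mul_assoc, inv_mul _ r]
      exact ⟨fun ⟨d, hd⟩ => ⟨d, r.inv_mul_left_cancel (by rw [hd, mul_assoc])⟩,
        mul_dvd_mul_left _⟩
    · rw [← mul_assoc, val_mul _ r]
      exact ⟨r.mul_val_right_cancel, congrArg (· * r.val)⟩

/-- The suffixes giving right factors of `q * z` are those of `z` and the unit suffixes of `q`,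
and the contributions of the latter telescope. -/
theorem exists_parse_mul_eq_inl_mul {z q : FreeMonoid A} (hp : p.inv ∣ b) (hpz : p.val = π z)
    {l : M} (hl : l * π q = 1) : ∃ g : Mˣ, parse π b (q * z) = .inl g * parse π b z ∧
      (IsUnit (π q) → π q = g) := by
  induction q using FreeMonoid.inductionOn' generalizing l with
  | one => exact ⟨1, by simp, by simp⟩
  | of_mul a q ih =>
    obtain ⟨g, hg, -⟩ := ih (l := l * π (of a)) (by rw [mul_assoc, ← map_mul, hl])
    by_cases hu : IsUnit (π (of a * q))
    · obtain ⟨h, hh⟩ := hu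
      refine ⟨h, ?_, fun _ => hh.symm⟩
      have hdvd : (ofUnits h * p).inv ∣ b := (Units.mul_right_dvd (u := h⁻¹)).2 hp
      obtain ⟨c, hc, hparse⟩ := exists_parse_of_mul_eq (a := a) (s := q * z) hM hdvd
        (by rw [← mul_assoc, map_mul, ← hh, ← hpz]; rfl)
      have hch : c * ofUnits g = ofUnits h := by
        rwa [hg, map_mul, eval_inl, eval_parse hM hp hpz, ← mul_assoc, mul_left_inj] at hc
      obtain rfl : c = ofUnits (h * g⁻¹) := by
        rw [← mul_left_inj (ofUnits g), hch, ← map_mul, inv_mul_cancel_right]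
      rw [mul_assoc, hparse, hg, syllable_ofUnits, ← mul_assoc, ← map_mul, inv_mul_cancel_right]
    · refine ⟨g, ?_, fun h => absurd h hu⟩
      rw [mul_assoc, parse_of_mul_of_forall_ne, hg]
      intro r _ hr
      exact hu (isUnit_of_val_eq_mul hl (by rw [hr, ← mul_assoc, map_mul]))

theorem parse_mul_of_map_eq_one {w : FreeMonoid A} (hw : π w = 1) (b : M) (z : FreeMonoid A) :
    parse π b (w * z) = parse π b z := by
  by_cases hz : ∀ p : RightUnit M, p.inv ∣ b → p.val ≠ π z
  · exact parse_mul_of_forall_ne hz (l := 1) (by rw [hw, one_mul])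
  · push Not at hz
    obtain ⟨p, hp, hpz⟩ := hz
    obtain ⟨g, hg, hwg⟩ := exists_parse_mul_eq_inl_mul hM (q := w) hp hpz (l := 1) (by simp [hw])
    obtain rfl : g = 1 := Units.ext (by rw [← hwg (by simp [hw]), hw, Units.val_one])
    rw [hg, map_one, one_mul]

theorem parse_mul_mul_of_map_eq_one {w : FreeMonoid A} (hw : π w = 1) (b : M)
    (x z : FreeMonoid A) : parse π b (x * w * z) = parse π b (x * z) := by
  induction x using FreeMonoid.inductionOn' with
  | one => simpa using parse_mul_of_map_eq_one hM hw b z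
  | of_mul a x ih =>
    have hπ : π (of a * (x * w * z)) = π (of a * (x * z)) := by simp [hw]
    rw [mul_assoc, mul_assoc, ← mul_assoc x, parse_of_mul, ih, hπ, mul_assoc (of a),
      parse_of_mul]

theorem parse_eq_inl {u : FreeMonoid A} {g : Mˣ} (hu : π u = g) :
    parse π ↑g⁻¹ u = .inl g := by
  obtain ⟨h, hh, hg⟩ := exists_parse_mul_eq_inl_mul hM (p := 1) (q := u) (one_dvd (↑g⁻¹ : M))
    (map_one π).symm (l := ↑g⁻¹) (by simp [hu])
  obtain rfl : g = h := Units.ext (by rw [← hu, hg (hu ▸ g.isUnit)])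
  simpa using hh

/-- The prefix `q` left over by the last factor of `s` has no suffix giving a factor inside the
next syllable: such a suffix would already have given one in `s`. -/
theorem exists_parse_eq_one (b : M) (s : FreeMonoid A) :
    ∃ q, π s = π q * (eval (parse π b s)).val ∧
      ∀ c : RightUnit M, (c * eval (parse π b s)).inv ∣ b → parse π c.inv q = 1 := by
  induction s using FreeMonoid.inductionOn' with
  | one => exact ⟨1, by simp, fun _ _ => rfl⟩
  | of_mul a s ih =>
    by_cases h : ∀ p : RightUnit M, p.inv ∣ b → p.val ≠ π (of a * s)
    · obtain ⟨q, hq, hq_parse⟩ := ih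
      have hπ : π (of a * s) = π (of a * q) * (eval (parse π b s)).val := by
        rw [map_mul, map_mul, hq, mul_assoc]
      rw [parse_of_mul_of_forall_ne h]
      refine ⟨of a * q, hπ, fun c hc => ?_⟩
      rw [parse_of_mul_of_forall_ne, hq_parse c hc]
      intro d hdc hd
      refine h (d * eval (parse π b s)) ((mul_dvd_mul_left _ hdc).trans hc) ?_
      rw [hπ, ← hd, val_mul]
    · push Not at h
      obtain ⟨p, hp, hps⟩ := h
      exact ⟨1, by rw [eval_parse hM hp hps, hps, map_one, one_mul], fun _ _ => rfl⟩

theorem exists_parse_nextFactor (b : M) (a : A) (s : FreeMonoid A) :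
    let c := nextFactor b (π (of a * s)) (eval (parse π b s))
    ∃ u, π u = c.val ∧ parse π c.inv u = syllable c := by
  intro c
  rcases nextFactor_eq_one_or b (π (of a * s)) (eval (parse π b s)) with hc | ⟨hdvd, hval⟩
  · exact ⟨1, by simp [c, hc], by simp [c, hc]⟩
  · obtain ⟨q, hq, hq_parse⟩ := exists_parse_eq_one (π := π) hM b s
    have hcq : c.val = π (of a * q) := (eval (parse π b s)).mul_val_right_cancel (by
      rw [← val_mul, hval, map_mul, map_mul, hq, mul_assoc])
    refine ⟨of a * q, hcq.symm, ?_⟩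
    rw [parse_of_mul, hq_parse c hdvd, map_one,
      nextFactor_eq hM (c := c) (by rw [mul_one]) (by rw [mul_one, hcq]), mul_one]

end Rigid

end RightUnit

section Words

variable {A : Type*}

theorem exists_of_freeMonoid_mul_eq_mul {a b c d : FreeMonoid A} (h : a * b = c * d) :
    (∃ t, c = a * t ∧ b = t * d) ∨ ∃ t, a = c * t ∧ d = t * b :=
  List.append_eq_append_iff.1 h

theorem exists_of_freeMonoid_mul_mul_eq_mul {x w y u v : FreeMonoid A} (h : x * w * y = u * v) :
    (∃ t, u = x * w * t ∧ y = t * v) ∨ (∃ s t, w = s * t ∧ u = x * s ∧ v = t * y) ∨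
      ∃ t, x = u * t ∧ v = t * w * y := by
  rcases exists_of_freeMonoid_mul_eq_mul h with h | ⟨t, ht, hv⟩
  · exact .inl h
  · rcases exists_of_freeMonoid_mul_eq_mul ht with ⟨s, hu, hw⟩ | ⟨s, hx, ht⟩
    · exact .inr (.inl ⟨s, t, hw, hu, hv⟩)
    · exact .inr (.inr ⟨s, hx, by rw [hv, ht]⟩)

theorem freeMonoid_dvd_or_dvd_of_dvd {u v w : FreeMonoid A} (hu : u ∣ w) (hv : v ∣ w) :
    u ∣ v ∨ v ∣ u := by
  obtain ⟨s, rfl⟩ := hu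
  obtain ⟨t, ht⟩ := hv
  rcases exists_of_freeMonoid_mul_eq_mul ht with ⟨r, hr, -⟩ | ⟨r, hr, -⟩
  exacts [.inl ⟨r, hr⟩, .inr ⟨r, hr⟩]

theorem finite_setOf_freeMonoid_mul_mem {W : Set (FreeMonoid A)} (hW : W.Finite) :
    {p : FreeMonoid A × FreeMonoid A | p.1 * p.2 ∈ W}.Finite := by
  refine (hW.biUnion fun w _ => (Set.finite_Iic w.toList.length).image fun n =>
    (FreeMonoid.ofList (w.toList.take n), FreeMonoid.ofList (w.toList.drop n))).subset ?_
  rintro ⟨x, y⟩ hxy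
  refine Set.mem_biUnion hxy ⟨x.toList.length, ?_, ?_⟩ <;> simp

theorem finite_of_fg_freeMonoid [Monoid.FG (FreeMonoid A)] : Finite A := by
  obtain ⟨S, hS, hfin⟩ := (Monoid.fg_iff (M := FreeMonoid A)).1 ‹_›
  refine Set.finite_univ_iff.1
    ((hfin.biUnion fun x _ => (x.toList.finite_toSet : {a | a ∈ x}.Finite)).subset fun a _ => ?_)
  have hmem : ∀ x : FreeMonoid A, ∀ a ∈ x, ∃ y ∈ S, a ∈ y := by
    intro x
    induction hS ▸ Submonoid.mem_top x using Submonoid.closure_induction with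
    | mem x hx => exact fun a ha => ⟨x, hx, ha⟩
    | one => exact fun a ha => (FreeMonoid.notMem_one ha).elim
    | mul x y _ _ hx hy => exact fun a ha => (FreeMonoid.mem_mul.1 ha).elim (hx a) (hy a)
  obtain ⟨y, hy, hay⟩ := hmem (of a) a FreeMonoid.mem_of_self
  exact Set.mem_biUnion hy hay

end Words

section FreeProduct

variable {G : Type*} [Monoid G]

theorem coprodMap_id_freeMonoidMap_injective {α β : Type*} {f : α → β}
    (hf : Function.Injective f) :
    Function.Injective (Coprod.map (MonoidHom.id G) (FreeMonoid.map f)) := by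
  let ρ : Coprod G (FreeMonoid β) →* Coprod G (FreeMonoid α) :=
    Coprod.map (.id G) (FreeMonoid.lift (Function.extend f of 1))
  have hρ : ρ.comp (Coprod.map (MonoidHom.id G) (FreeMonoid.map f)) = .id _ := by
    ext x
    · simp [ρ]
    · simp [ρ, hf.extend_apply]
  exact Function.LeftInverse.injective (DFunLike.congr_fun hρ)

/-- The retraction `Φ` reads off normal forms with respect to the generators `X`, so no relations
hold among them. -/
theorem nonempty_mulEquiv_coprod_freeMonoid {N : Type*} [Monoid N] {X : Set N} {i : G →* N}
    {Φ : N →* Coprod G (FreeMonoid N)} (hi : ∀ g, Φ (i g) = .inl g)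
    (hX : ∀ x ∈ X, Φ x = .inr (of x)) (hgen : Submonoid.closure (Set.range i ∪ X) = ⊤) :
    Nonempty (N ≃* Coprod G (FreeMonoid X)) := by
  let Ψ : Coprod G (FreeMonoid X) →* N := Coprod.lift i (FreeMonoid.lift (↑))
  have hΦΨ : Φ.comp Ψ = Coprod.map (MonoidHom.id G) (FreeMonoid.map (↑)) := by
    ext x
    · simp [Ψ, hi]
    · simp [Ψ, hX x x.2]
  have hinj : Function.Injective Ψ := by
    refine .of_comp (f := Φ) ?_
    rw [← MonoidHom.coe_comp, hΦΨ]
    exact coprodMap_id_freeMonoidMap_injective Subtype.val_injective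
  have hsurj : Function.Surjective Ψ := by
    rw [← MonoidHom.mrange_eq_top, ← top_le_iff, ← hgen, Submonoid.closure_le]
    rintro _ (⟨g, rfl⟩ | hx)
    · exact ⟨.inl g, by simp [Ψ]⟩
    · exact ⟨.inr (of ⟨_, hx⟩), by simp [Ψ]⟩
  exact ⟨(MulEquiv.ofBijective Ψ ⟨hinj, hsurj⟩).symm⟩

end FreeProduct

/-- `π` presents `M` as the special monoid `⟨A ∣ w = 1 (w ∈ W)⟩`. -/
structure IsSpecialPresentation {A M : Type*} [Monoid M] (π : FreeMonoid A →* M)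
    (W : Set (FreeMonoid A)) : Prop where
  surjective : Function.Surjective π
  ker_eq : Con.ker π = conGen fun x y => x ∈ W ∧ y = 1

namespace IsSpecialPresentation

open RightUnit

variable {A M : Type*} [Monoid M] {π : FreeMonoid A →* M} {W : Set (FreeMonoid A)}

theorem map_eq_one (h : IsSpecialPresentation π W) {w : FreeMonoid A} (hw : w ∈ W) : π w = 1 := by
  rw [← map_one π, ← Con.ker_rel, h.ker_eq]
  exact .of _ _ ⟨hw, rfl⟩

theorem iff_of_map_eq (h : IsSpecialPresentation π W) {C : FreeMonoid A → Prop}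
    (hC : ∀ w ∈ W, ∀ x y, C (x * w * y) ↔ C (x * y)) {u v : FreeMonoid A} (huv : π u = π v) :
    C u ↔ C v := by
  let c : Con (FreeMonoid A) :=
    { r u v := ∀ x y, C (x * u * y) ↔ C (x * v * y)
      iseqv := ⟨fun _ _ _ => .rfl, fun h x y => (h x y).symm,
        fun h₁ h₂ x y => (h₁ x y).trans (h₂ x y)⟩
      mul' {u u' v v'} hu hv x y := by
        simpa only [mul_assoc] using (hu x (v * y)).trans (by
          simpa only [mul_assoc] using hv (x * u') y) }
  have hle : Con.ker π ≤ c := by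
    rw [h.ker_eq, Con.conGen_le]
    rintro w _ ⟨hw, rfl⟩ x y
    rw [mul_one]
    exact hC w hw x y
  simpa using hle huv 1 1

/-- A relator can be inserted inside a prefix representing a chosen right inverse only at a place
where the two halves of the relator are units. -/
theorem exists_dvd_associated_inv (h : IsSpecialPresentation π W) {p : RightUnit M}
    {v : FreeMonoid A} (hp : p.inv ∣ π v) : ∃ u, u ∣ v ∧ Associated (π u) p.inv := by
  obtain ⟨d, hd⟩ := hp
  obtain ⟨u, hu⟩ := h.surjective p.inv
  obtain ⟨u', rfl⟩ := h.surjective d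
  have huu' : π v = π (u * u') := by rw [hd, map_mul, hu]
  refine (h.iff_of_map_eq (C := fun z => ∃ u, u ∣ z ∧ Associated (π u) p.inv) ?_ huu').2
    ⟨u, dvd_mul_right u u', hu ▸ .refl _⟩
  refine fun w hw x y => ⟨?_, ?_⟩ <;> rintro ⟨u, ⟨v, huv⟩, hu⟩
  · rcases exists_of_freeMonoid_mul_mul_eq_mul huv with
      ⟨t, rfl, rfl⟩ | ⟨s, t, rfl, rfl, rfl⟩ | ⟨t, rfl, rfl⟩
    · refine ⟨x * t, ⟨v, (mul_assoc ..).symm⟩, ?_⟩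
      simpa [h.map_eq_one hw] using hu
    · obtain ⟨g, hg⟩ := hu
      have hst : π s * π t = 1 := by rw [← map_mul, h.map_eq_one hw]
      obtain ⟨k, hk⟩ := isUnit_of_mul_mul_eq_inv hst (by rwa [← map_mul])
      exact ⟨x, dvd_mul_right x y, k * g, by rw [← hg, map_mul, ← hk, Units.val_mul, mul_assoc]⟩
    · exact ⟨u, ⟨t * y, by rw [mul_assoc]⟩, hu⟩
  · rcases exists_of_freeMonoid_mul_eq_mul huv with ⟨t, rfl, rfl⟩ | ⟨t, rfl, rfl⟩
    · refine ⟨x * w * t, ⟨v, by simp only [mul_assoc]⟩, ?_⟩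
      simpa [h.map_eq_one hw] using hu
    · exact ⟨u, ⟨t * w * y, by simp only [mul_assoc]⟩, hu⟩

theorem hasRigidRightUnits (h : IsSpecialPresentation π W) : HasRigidRightUnits M := by
  intro p q b hp hq
  obtain ⟨v, rfl⟩ := h.surjective b
  obtain ⟨x, hx, hxp⟩ := h.exists_dvd_associated_inv hp
  obtain ⟨y, hy, hyq⟩ := h.exists_dvd_associated_inv hq
  rw [← hxp.dvd_iff_dvd_left, ← hyq.dvd_iff_dvd_left, ← hxp.dvd_iff_dvd_right,
    ← hyq.dvd_iff_dvd_right]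
  exact (freeMonoid_dvd_or_dvd_of_dvd hx hy).imp (map_dvd π) (map_dvd π)

theorem parse_eq_of_map_eq (h : IsSpecialPresentation π W) (b : M) {u v : FreeMonoid A}
    (huv : π u = π v) : parse π b u = parse π b v :=
  (h.iff_of_map_eq (C := fun z => parse π b z = parse π b v) (fun w hw x y => by
    rw [parse_mul_mul_of_map_eq_one h.hasRigidRightUnits (h.map_eq_one hw)]) huv).2 rfl

/-- The homomorphism reading off the factorization of a right unit into syllables. -/
noncomputable def factor (h : IsSpecialPresentation π W) : RightUnit M →* Syllables M where
  toFun p := parse π p.inv (Function.surjInv h.surjective p.val)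
  map_one' := by
    rw [h.parse_eq_of_map_eq _ (v := 1) (by simp [Function.surjInv_eq]), parse_one]
  map_mul' p q := by
    rw [h.parse_eq_of_map_eq (p * q).inv (v := Function.surjInv h.surjective p.val *
        Function.surjInv h.surjective q.val) (by simp [Function.surjInv_eq]), inv_mul,
      parse_inv_mul h.hasRigidRightUnits (by rw [Function.surjInv_eq h.surjective])]

theorem factor_eq_parse (h : IsSpecialPresentation π W) {p : RightUnit M} {u : FreeMonoid A}
    (hu : π u = p.val) : h.factor p = parse π p.inv u :=
  h.parse_eq_of_map_eq _ (by rw [Function.surjInv_eq h.surjective, hu])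

theorem factor_ofUnits (h : IsSpecialPresentation π W) (g : Mˣ) :
    h.factor (ofUnits g) = .inl g := by
  obtain ⟨u, hu⟩ := h.surjective g
  rw [h.factor_eq_parse hu, ofUnits_apply_inv, parse_eq_inl h.hasRigidRightUnits hu]

theorem factor_nextFactor (h : IsSpecialPresentation π W) (b : M) (a : A) (s : FreeMonoid A) :
    h.factor (nextFactor b (π (of a * s)) (eval (parse π b s))) =
      syllable (nextFactor b (π (of a * s)) (eval (parse π b s))) := by
  obtain ⟨u, hu, hparse⟩ := exists_parse_nextFactor h.hasRigidRightUnits b a s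
  rw [h.factor_eq_parse hu, hparse]

theorem closure_ofUnits_union_letters (h : IsSpecialPresentation π W) :
    Submonoid.closure (Set.range ofUnits ∪ {x | h.factor x = .inr (of x)}) = ⊤ := by
  have hmem (b : M) (s : FreeMonoid A) : eval (parse π b s) ∈
      Submonoid.closure (Set.range ofUnits ∪ {x | h.factor x = .inr (of x)}) := by
    induction s using FreeMonoid.inductionOn' with
    | one => simp
    | of_mul a s ih =>
      rw [eval_parse_of_mul]
      refine mul_mem (Submonoid.subset_closure ?_) ih
      by_cases hu : IsUnit (nextFactor b (π (of a * s)) (eval (parse π b s))).val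
      · exact .inl ⟨hu.unit, (eq_ofUnits_of_val_eq hu.unit_spec.symm).symm⟩
      · exact .inr (by rw [Set.mem_ofPred_eq, h.factor_nextFactor, syllable, dif_neg hu])
  refine eq_top_iff.2 fun p _ => ?_
  obtain ⟨u, hu⟩ := h.surjective p.val
  rw [← eval_parse h.hasRigidRightUnits dvd_rfl hu.symm]
  exact hmem p.inv u

theorem exists_mulEquiv_coprod_freeMonoid (h : IsSpecialPresentation π W) :
    ∃ X : Set (RightUnit M), Nonempty (RightUnit M ≃* Coprod Mˣ (FreeMonoid X)) :=
  ⟨_, nonempty_mulEquiv_coprod_freeMonoid h.factor_ofUnits (fun _ hx => hx)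
    h.closure_ofUnits_union_letters⟩

/-- The right units `(π x, π y)` obtained by cutting the relators `x * y ∈ W` in two. -/
def relatorSplits (π : FreeMonoid A →* M) (W : Set (FreeMonoid A)) : Set (RightUnit M) :=
  {p | ∃ x y, x * y ∈ W ∧ p.val = π x ∧ p.inv = π y}

theorem finite_relatorSplits (π : FreeMonoid A →* M) (hW : W.Finite) :
    (relatorSplits π W).Finite := by
  refine (((finite_setOf_freeMonoid_mul_mem hW).image (Prod.map π π)).preimage
    (f := fun p : RightUnit M => (p.val, p.inv)) ?_).subset ?_
  · exact fun p _ q _ hpq => RightUnit.ext (Prod.ext_iff.1 hpq).1 (Prod.ext_iff.1 hpq).2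
  · rintro p ⟨x, y, hxy, hx, hy⟩
    exact ⟨(x, y), hxy, Prod.ext hx.symm hy.symm⟩

theorem mem_closure_relatorSplits (h : IsSpecialPresentation π W) {p : RightUnit M}
    {x y s t : FreeMonoid A} (hst : s * t ∈ W) (hp : p.val = π (x * s)) (hp' : p.inv = π (t * y))
    (hxy : ∀ q : RightUnit M, q.val = π x → q.inv = π y →
      q ∈ Submonoid.closure (relatorSplits π W)) :
    p ∈ Submonoid.closure (relatorSplits π W) := by
  have hπst : π s * π t = 1 := by rw [← map_mul, h.map_eq_one hst]
  have hπxy : π x * π y = 1 := by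
    simpa [hp, hp', mul_assoc, ← mul_assoc (π s), hπst] using p.val_mul_inv
  obtain rfl : p = ⟨π x, π y, hπxy⟩ * ⟨π s, π t, hπst⟩ :=
    RightUnit.ext (by simp [hp]) (by simp [hp'])
  exact mul_mem (hxy _ rfl rfl) (Submonoid.subset_closure ⟨s, t, hst, rfl, rfl⟩)

theorem closure_relatorSplits (h : IsSpecialPresentation π W) :
    Submonoid.closure (relatorSplits π W) = ⊤ := by
  let C (z : FreeMonoid A) : Prop := ∀ u v, z = u * v → ∀ p : RightUnit M, p.val = π u →
    p.inv = π v → p ∈ Submonoid.closure (relatorSplits π W)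
  have hC_one : C 1 := by
    intro u v huv p hu hv
    obtain ⟨rfl, rfl⟩ := List.append_eq_nil_iff.1 huv.symm
    rw [show p = 1 from RightUnit.ext (hu.trans (map_one π)) (hv.trans (map_one π))]
    exact one_mem _
  have hC : ∀ w ∈ W, ∀ x y, C (x * w * y) ↔ C (x * y) := by
    refine fun w hw x y => ⟨fun hC u v huv p hu hv => ?_, fun hC u v huv p hu hv => ?_⟩
    · rcases exists_of_freeMonoid_mul_eq_mul huv with ⟨t, rfl, rfl⟩ | ⟨t, rfl, rfl⟩
      · refine hC (x * w * t) v (by simp only [mul_assoc]) p ?_ hv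
        simpa [h.map_eq_one hw] using hu
      · refine hC u (t * w * y) (by simp only [mul_assoc]) p hu ?_
        simpa [h.map_eq_one hw] using hv
    · rcases exists_of_freeMonoid_mul_mul_eq_mul huv with
        ⟨t, rfl, rfl⟩ | ⟨s, t, rfl, rfl, rfl⟩ | ⟨t, rfl, rfl⟩
      · refine hC (x * t) v (by simp only [mul_assoc]) p ?_ hv
        simpa [h.map_eq_one hw] using hu
      · exact h.mem_closure_relatorSplits hw hu hv (hC x y rfl)
      · refine hC u (t * y) (by simp only [mul_assoc]) p hu ?_
        simpa [h.map_eq_one hw] using hv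
  refine eq_top_iff.2 fun p _ => ?_
  obtain ⟨u, hu⟩ := h.surjective p.val
  obtain ⟨v, hv⟩ := h.surjective p.inv
  have huv : π (u * v) = π 1 := by rw [map_mul, hu, hv, p.val_mul_inv, map_one]
  exact (h.iff_of_map_eq hC huv).2 hC_one u v rfl p hu.symm hv.symm

theorem fg_rightUnit (h : IsSpecialPresentation π W) (hW : W.Finite) :
    Monoid.FG (RightUnit M) :=
  Monoid.fg_iff.2 ⟨_, h.closure_relatorSplits, finite_relatorSplits π hW⟩

theorem exists_mulEquiv_coprod_freeMonoid_fin (h : IsSpecialPresentation π W) (hW : W.Finite) :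
    ∃ n : ℕ, Nonempty (RightUnit M ≃* Coprod Mˣ (FreeMonoid (Fin n))) := by
  obtain ⟨X, ⟨e⟩⟩ := h.exists_mulEquiv_coprod_freeMonoid
  have := h.fg_rightUnit hW
  have : Monoid.FG (FreeMonoid X) := Monoid.fg_of_surjective
    (Coprod.snd.comp e.toMonoidHom) (Coprod.snd_surjective.comp e.surjective)
  have : Finite X := finite_of_fg_freeMonoid
  obtain ⟨n, ⟨f⟩⟩ := Finite.exists_equiv_fin X
  exact ⟨n, ⟨e.trans (.coprodCongr (.refl _) (FreeMonoid.freeMonoidCongr f))⟩⟩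

end IsSpecialPresentation

theorem isSpecialPresentation_mk {A : Type*} {W : Set (FreeMonoid A)}
    {rel : FreeMonoid A → FreeMonoid A → Prop} (hrel : ∀ x y, rel x y ↔ x ∈ W ∧ y = 1) :
    IsSpecialPresentation (PresentedMonoid.mk rel) W where
  surjective := PresentedMonoid.surjective_mk
  ker_eq := by
    obtain rfl : rel = fun x y => x ∈ W ∧ y = 1 := funext₂ fun x y => propext (hrel x y)
    exact Con.ext fun _ _ => PresentedMonoid.mk_eq_mk_iff

theorem special_monoid_N_free_product_general {A ι : Type*} [Finite ι] (w : ι → FreeMonoid A)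
    (rel : FreeMonoid A → FreeMonoid A → Prop) (hrel : ∀ x y, rel x y ↔ ∃ i, x = w i ∧ y = 1)
    (N : Submonoid (PresentedMonoid rel × (PresentedMonoid rel)ᵐᵒᵖ))
    (hN : ∀ p : PresentedMonoid rel × (PresentedMonoid rel)ᵐᵒᵖ, p ∈ N ↔ p.1 * p.2.unop = 1) :
    ∃ n : ℕ, Nonempty (N ≃* Coprod (PresentedMonoid rel)ˣ (FreeMonoid (Fin n))) := by
  have hπ : IsSpecialPresentation (PresentedMonoid.mk rel) (Set.range w) :=
    isSpecialPresentation_mk fun x y => by simp [hrel, eq_comm]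
  obtain ⟨n, ⟨e⟩⟩ := hπ.exists_mulEquiv_coprod_freeMonoid_fin (Set.finite_range w)
  exact ⟨n, ⟨(RightUnit.mulEquivOfMemIff N hN).trans e⟩⟩

/-- Let `M = ⟨A ∣ w₁ = 1, …, w_k = 1⟩` be a finitely presented special monoid, `Mˣ` its
group of units, and `N` the submonoid of `M × Mᵐᵒᵖ` consisting of the pairs `(u, v)`
with `u * v = 1` in `M`.  Then `N` is isomorphic to the free product (monoid coproduct)
of `Mˣ` with a free monoid of finite rank. -/
theorem special_monoid_N_free_product {A : Type*} [Fintype A] {k : ℕ}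
    (w : Fin k → FreeMonoid A)
    (rel : FreeMonoid A → FreeMonoid A → Prop)
    (hrel : ∀ x y, rel x y ↔ ∃ i : Fin k, x = w i ∧ y = 1)
    (N : Submonoid (PresentedMonoid rel × (PresentedMonoid rel)ᵐᵒᵖ))
    (hN : ∀ p : PresentedMonoid rel × (PresentedMonoid rel)ᵐᵒᵖ,
      p ∈ N ↔ p.1 * p.2.unop = 1) :
    ∃ n : ℕ, Nonempty
      (N ≃* Monoid.Coprod (PresentedMonoid rel)ˣ (FreeMonoid (Fin n))) :=
  special_monoid_N_free_product_general w rel hrel N hN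
end

section
/- Let M be a finitely presented special monoid ⟨A ∣ w₁ = 1, …, w_k = 1⟩ and let N be the submonoid of M × Mᵒᵖ consisting of the pairs (u, v) with u * v = 1 in M. Then M × M is a free right N-set under the action (m₁, m₂)·(n₁, n₂) = (m₁ n₁, n₂ m₂): there exists a subset B ⊆ M × M such that every element of M × M can be written in exactly one way as (b₁ n₁, n₂ b₂) with (b₁, b₂) ∈ B and (n₁, n₂) ∈ N. -/
/-!
Fix a surjection `π` from a free monoid onto `M` whose kernel is generated by pairs `(w, 1)`.
If a word represents `b * p` with `p` right invertible, then it splits as `x * y` with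
`π x = b * g` and `p = g * π y` for some unit `g`: the words for which a given splitting exists form
a union of classes of a congruence, because a suffix of a word representing `1` that is also right
invertible is a unit. Two consequences are that of two factorisations `b * p = c * q` with `p`
right invertible one refines the other, and that multiplication by a right invertible nonunit
increases the word length taken modulo units. Moreover units act freely on `M`: scanning a word
from right to left and recording the last unit passed gives a `Mˣ`-equivariant map `M → Mˣ`.
Hence `m * p = m * q` with `p` and `q` right invertible forces `p = q`, and dually since `Mᵐᵒᵖ` is
special too.

For `n₁ * n₂ = 1 = k₁ * k₂` and `(b₁ * n₁, n₂ * b₂) = (c₁ * k₁, k₂ * c₂)`, refinement on the left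
gives, say, `b₁ = c₁ * s` and `k₁ = s * n₁`. Then `(s, n₁ * k₂) ∈ N` moves `(c₁, c₂)` to
`(b₁, b₂)`, so overlapping `N`-orbits are nested, and the pairs not divisible by a nonunit
of `N`, taken up to units, form a basis.
-/

namespace SpecialMonoid

/-! ### Free actions -/

section FreeAction

variable {S X : Type*} [Monoid S] [MulAction S X]

variable (S) in
/-- An element of an `S`-set is primitive if it is divisible by units of `S` only. The primitive
elements are the candidates for members of a basis. -/
def IsPrimitive (x : X) : Prop :=
  ∀ (s : S) (y : X), x = s • y → IsUnit s

lemma IsPrimitive.units_smul {x : X} (hx : IsPrimitive S x) (u : Sˣ) : IsPrimitive S (u • x) := by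
  intro s y h
  have : x = (↑u⁻¹ * s) • y := by rw [mul_smul, ← h, ← Units.smul_def, inv_smul_smul]
  exact (Units.isUnit_units_mul u⁻¹ s).1 (hx _ y this)

lemma exists_smul_isPrimitive {ι : Type*} [Preorder ι] [WellFoundedLT ι] (f : X → ι)
    (hf : ∀ (s : S) x, ¬IsUnit s → f x < f (s • x)) (x : X) :
    ∃ (s : S) (b : X), IsPrimitive S b ∧ x = s • b := by
  obtain ⟨b, ⟨s, rfl⟩, hmin⟩ := exists_minimalFor_of_wellFoundedLT
    (fun b => ∃ s : S, x = s • b) f ⟨x, 1, (one_smul S x).symm⟩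
  refine ⟨s, b, ?_, rfl⟩
  rintro t y rfl
  by_contra ht
  have hlt := hf t y ht
  exact hlt.not_ge (hmin ⟨s * t, (mul_smul s t y).symm⟩ hlt.le)

lemma IsPrimitive.exists_units_smul_eq
    (hnest : ∀ (s t : S) (x y : X), s • x = t • y → (∃ p : S, x = p • y) ∨ ∃ p : S, y = p • x)
    {b c : X} (hb : IsPrimitive S b) (hc : IsPrimitive S c) {s t : S} (h : s • b = t • c) :
    ∃ u : Sˣ, u • c = b := by
  rcases hnest s t b c h with ⟨p, hp⟩ | ⟨p, hp⟩
  · obtain ⟨u, rfl⟩ := hb p c hp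
    exact ⟨u, hp.symm⟩
  · obtain ⟨u, rfl⟩ := hc p b hp
    exact ⟨u⁻¹, inv_smul_eq_iff.2 hp⟩

theorem exists_bijective_smul {ι : Type*} [Preorder ι] [WellFoundedLT ι] (f : X → ι)
    (hf : ∀ (s : S) x, ¬IsUnit s → f x < f (s • x))
    (hcancel : ∀ (s t : S) (x : X), s • x = t • x → s = t)
    (hnest : ∀ (s t : S) (x y : X), s • x = t • y → (∃ p : S, x = p • y) ∨ ∃ p : S, y = p • x) :
    ∃ B : Set X, Function.Bijective fun p : B × S => p.2 • (p.1 : X) := by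
  let rep : MulAction.orbitRel.Quotient Sˣ X → X := Quotient.out
  refine ⟨{b | IsPrimitive S b ∧ b ∈ Set.range rep}, ?_, fun x => ?_⟩
  · rintro ⟨⟨_, hb, β, rfl⟩, s⟩ ⟨⟨_, hc, γ, rfl⟩, t⟩ (h : s • rep β = t • rep γ)
    have hβγ : β = γ := by
      rw [← Quotient.out_eq β, ← Quotient.out_eq γ]
      exact Quotient.sound (hb.exists_units_smul_eq hnest hc h)
    subst hβγ
    rw [hcancel s t _ h]
  · obtain ⟨s, b, hb, rfl⟩ := exists_smul_isPrimitive f hf x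
    obtain ⟨u, hu⟩ : rep ⟦b⟧ ∈ MulAction.orbit Sˣ b :=
      Quotient.mk_out (s := MulAction.orbitRel Sˣ X) b
    have hrep : IsPrimitive S (rep ⟦b⟧) := hu ▸ hb.units_smul u
    refine ⟨(⟨rep ⟦b⟧, hrep, ⟦b⟧, rfl⟩, s * ↑u⁻¹), ?_⟩
    change (s * ↑u⁻¹) • rep ⟦b⟧ = s • b
    rw [mul_smul, ← Units.smul_def, inv_smul_eq_iff.2 hu.symm]

end FreeAction

/-! ### Special monoids -/

variable {A M : Type*} [Monoid M] {π : FreeMonoid A →* M}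

/-- `π` exhibits `M` as a special monoid with generators `A`: every relation is a consequence of
relations of the form `w = 1`. All such relations that hold in `M` are taken as defining ones. -/
structure IsSpecial (π : FreeMonoid A →* M) : Prop where
  surjective : Function.Surjective π
  ker_le_conGen : Con.ker π ≤ conGen fun u v => π u = 1 ∧ v = 1

lemma IsSpecial.ker_le (hπ : IsSpecial π) {c : Con (FreeMonoid A)}
    (hc : ∀ w, π w = 1 → c w 1) : Con.ker π ≤ c :=
  hπ.ker_le_conGen.trans <| Con.conGen_le.2 <| by
    rintro w _ ⟨hw, rfl⟩
    exact hc w hw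

lemma isSpecial_mk (rel : FreeMonoid A → FreeMonoid A → Prop) (hrel : ∀ x y, rel x y → y = 1) :
    IsSpecial (PresentedMonoid.mk rel) where
  surjective := PresentedMonoid.surjective_mk
  ker_le_conGen u v huv := by
    refine Con.conGen_mono (fun x y hxy => ?_) (PresentedMonoid.mk_eq_mk_iff.1 huv)
    obtain rfl := hrel x y hxy
    exact ⟨PresentedMonoid.mk_eq_mk_of_rel hxy, rfl⟩

/-- The homomorphism to the opposite monoid that agrees with `π` on generators. It is used to
dualise statements about special monoids. -/
def reverseOp (π : FreeMonoid A →* M) : FreeMonoid A →* Mᵐᵒᵖ where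
  toFun u := .op (π u.reverse)
  map_one' := congrArg MulOpposite.op (map_one π)
  map_mul' u v := by rw [FreeMonoid.reverse_mul, map_mul, MulOpposite.op_mul]

lemma IsSpecial.reverseOp (hπ : IsSpecial π) : IsSpecial (reverseOp π) where
  surjective m := by
    obtain ⟨u, hu⟩ := hπ.surjective m.unop
    refine ⟨u.reverse, MulOpposite.unop_injective ?_⟩
    simpa [SpecialMonoid.reverseOp] using hu
  ker_le_conGen u v huv := by
    let c := conGen fun u v => SpecialMonoid.reverseOp π u = 1 ∧ v = 1
    let c' : Con (FreeMonoid A) :=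
      { r := fun u v => c u.reverse v.reverse
        iseqv := c.iseqv.comap FreeMonoid.reverse
        mul' := fun h₁ h₂ => by simpa only [FreeMonoid.reverse_mul] using c.mul h₂ h₁ }
    have hc' : ∀ w, π w = 1 → c' w 1 := fun w hw =>
      ConGen.Rel.of _ _ ⟨by simp [SpecialMonoid.reverseOp, hw], rfl⟩
    have h : c u.reverse.reverse v.reverse.reverse :=
      hπ.ker_le hc' (MulOpposite.op_injective huv)
    simpa only [FreeMonoid.reverse_reverse] using h

/-! ### Splitting words -/

lemma isUnit_of_mul_eq_one_of_mul_eq_one {a b c : M} (hab : a * b = 1) (hbc : b * c = 1) :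
    IsUnit b :=
  isUnit_iff_exists_and_exists.2 ⟨⟨c, hbc⟩, ⟨a, hab⟩⟩

/-- `IsSplitting π u p q` says that some prefix of the word `u` and the complementary suffix have
the values `p` and `q`, up to moving a unit from one to the other. -/
def IsSplitting (π : FreeMonoid A →* M) (u : FreeMonoid A) (p q : M) : Prop :=
  ∃ (x y : FreeMonoid A) (g : Mˣ), u = x * y ∧ π x = p * g ∧ g * π y = q

lemma isSplitting_mul (π : FreeMonoid A →* M) (x y : FreeMonoid A) :
    IsSplitting π (x * y) (π x) (π y) :=
  ⟨x, y, 1, rfl, by simp, by simp⟩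

lemma IsSplitting.mul_eq {u : FreeMonoid A} {p q : M} (h : IsSplitting π u p q) : p * q = π u := by
  obtain ⟨x, y, g, rfl, hx, rfl⟩ := h
  rw [map_mul, hx, mul_assoc]

lemma freeMonoid_exists_of_mul_eq_mul {u v x y : FreeMonoid A} (h : u * v = x * y) :
    (∃ z, x = u * z ∧ v = z * y) ∨ ∃ z, u = x * z ∧ y = z * v :=
  List.append_eq_append_iff.1 h

lemma isSplitting_mul_iff {u v : FreeMonoid A} {p q : M} :
    IsSplitting π (u * v) p q ↔
      (∃ p', p = π u * p' ∧ IsSplitting π v p' q) ∨ ∃ q', q = q' * π v ∧ IsSplitting π u p q' := by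
  constructor
  · rintro ⟨x, y, g, huv, hx, rfl⟩
    rcases freeMonoid_exists_of_mul_eq_mul huv with ⟨z, rfl, rfl⟩ | ⟨z, rfl, rfl⟩
    · refine .inl ⟨π z * ↑g⁻¹, ?_, z, y, g, rfl, by simp, rfl⟩
      rw [← mul_assoc, Units.eq_mul_inv_iff_mul_eq, ← hx, map_mul]
    · refine .inr ⟨g * π z, ?_, x, z, g, rfl, hx, rfl⟩
      rw [mul_assoc, map_mul]
  · rintro (⟨p', rfl, x, y, g, rfl, hx, rfl⟩ | ⟨q', rfl, x, y, g, rfl, hx, rfl⟩)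
    · exact ⟨u * x, y, g, (mul_assoc u x y).symm, by rw [map_mul, hx, mul_assoc], rfl⟩
    · exact ⟨x, y * v, g, mul_assoc x y v, hx, by rw [map_mul, mul_assoc]⟩

lemma isSplitting_iff_of_map_eq_one {w : FreeMonoid A} (hw : π w = 1) {p q r : M}
    (hq : q * r = 1) : IsSplitting π w p q ↔ p * q = 1 := by
  refine ⟨fun h => h.mul_eq.trans hw, fun hpq => ?_⟩
  obtain ⟨g, rfl⟩ := isUnit_of_mul_eq_one_of_mul_eq_one hpq hq
  exact ⟨w, 1, g, (mul_one w).symm, hw.trans hpq.symm, by simp⟩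

/-- The congruence identifying words that have the same value and the same splittings with right
invertible second component, so that splittings depend only on the value of a word once this
congruence contains the kernel. -/
def splittingCon (π : FreeMonoid A →* M) : Con (FreeMonoid A) where
  r u v := π u = π v ∧ ∀ p q r, q * r = 1 → (IsSplitting π u p q ↔ IsSplitting π v p q)
  iseqv :=
    { refl := fun _ => ⟨rfl, fun _ _ _ _ => Iff.rfl⟩
      symm := fun h => ⟨h.1.symm, fun p q r hq => (h.2 p q r hq).symm⟩
      trans := fun h₁ h₂ =>
        ⟨h₁.1.trans h₂.1, fun p q r hq => (h₁.2 p q r hq).trans (h₂.2 p q r hq)⟩ }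
  mul' := by
    rintro u u' v v' ⟨hu, hsu⟩ ⟨hv, hsv⟩
    refine ⟨by rw [map_mul, map_mul, hu, hv], fun p q r hq => ?_⟩
    rw [isSplitting_mul_iff, isSplitting_mul_iff, hu, hv]
    refine or_congr (exists_congr fun p' => and_congr_right' (hsv p' q r hq))
      (exists_congr fun q' => and_congr_right ?_)
    rintro rfl
    exact hsu p q' (π v' * r) (by rw [← mul_assoc, hq])

namespace IsSpecial

variable (hπ : IsSpecial π)
include hπ

theorem isSplitting {u : FreeMonoid A} {p q r : M} (hq : q * r = 1) (hu : π u = p * q) :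
    IsSplitting π u p q := by
  obtain ⟨x, rfl⟩ := hπ.surjective p
  obtain ⟨y, rfl⟩ := hπ.surjective q
  have hker : Con.ker π ≤ splittingCon π := hπ.ker_le fun w hw =>
    ⟨hw.trans (map_one π).symm, fun p q r hq => by
      rw [isSplitting_iff_of_map_eq_one hw hq, isSplitting_iff_of_map_eq_one (map_one π) hq]⟩
  have huxy : Con.ker π u (x * y) := hu.trans (map_mul π x y).symm
  exact ((hker huxy).2 _ _ r hq).2 (isSplitting_mul π x y)

theorem exists_eq_mul_of_mul_eq_mul {b c p q r : M} (hp : p * r = 1) (h : b * p = c * q) :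
    (∃ s, b = c * s ∧ q = s * p) ∨ ∃ s, c = b * s ∧ p = s * q := by
  obtain ⟨x, rfl⟩ := hπ.surjective c
  obtain ⟨y, rfl⟩ := hπ.surjective q
  have hsplit : IsSplitting π (x * y) b p := hπ.isSplitting hp (by rw [map_mul, h])
  rcases isSplitting_mul_iff.1 hsplit with ⟨s, hb, hs⟩ | ⟨s, hp', hs⟩
  · exact .inl ⟨s, hb, hs.mul_eq.symm⟩
  · exact .inr ⟨s, hs.mul_eq.symm, hp'⟩

end IsSpecial

/-- The length of a shortest word representing `m` up to right multiplication by a unit. It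
bounds the number of right invertible nonunits that can be split off from `m` on the right. -/
noncomputable def unitLength (π : FreeMonoid A →* M) (m : M) : ℕ :=
  sInf {n | ∃ (u : FreeMonoid A) (g : Mˣ), π u = m * g ∧ u.length = n}

lemma unitLength_le {u : FreeMonoid A} {m : M} {g : Mˣ} (h : π u = m * g) :
    unitLength π m ≤ u.length :=
  Nat.sInf_le ⟨u, g, h, rfl⟩

lemma IsSpecial.exists_length_eq_unitLength (hπ : IsSpecial π) (m : M) :
    ∃ (u : FreeMonoid A) (g : Mˣ), π u = m * g ∧ u.length = unitLength π m := by
  obtain ⟨u, hu⟩ := hπ.surjective m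
  exact Nat.sInf_mem (s := {n | ∃ (u : FreeMonoid A) (g : Mˣ), π u = m * g ∧ u.length = n})
    ⟨u.length, u, 1, by simpa using hu, rfl⟩

lemma IsSpecial.unitLength_lt_unitLength_mul (hπ : IsSpecial π) (m : M) {p r : M} (hp : p * r = 1)
    (hpu : ¬IsUnit p) : unitLength π m < unitLength π (m * p) := by
  obtain ⟨u, g, hu, hlen⟩ := hπ.exists_length_eq_unitLength (m * p)
  have hpg : p * g * (↑g⁻¹ * r) = 1 := by rw [mul_assoc, Units.mul_inv_cancel_left, hp]
  obtain ⟨x, y, h, rfl, hx, hy⟩ := hπ.isSplitting hpg (hu.trans (mul_assoc m p g))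
  have hy_ne : y ≠ 1 := by
    rintro rfl
    rw [map_one, mul_one] at hy
    exact hpu ((Units.isUnit_mul_units p g).1 (hy ▸ h.isUnit))
  have hy_pos : 0 < y.length := Nat.pos_of_ne_zero (mt FreeMonoid.length_eq_zero.1 hy_ne)
  calc unitLength π m ≤ x.length := unitLength_le hx
    _ < x.length + y.length := Nat.lt_add_of_pos_right hy_pos
    _ = unitLength π (m * p) := by rw [← hlen, FreeMonoid.length_mul]

/-! ### The action of the units -/

open Classical in
/-- Multiply `m` on the left by the letters of `u`, one at a time and starting with the last one.
The result is the last unit among `m` and all the products obtained, or `t` if there is none.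
Multiplying `m` and `t` by a unit on the right multiplies the result by it. -/
noncomputable def lastUnit (π : FreeMonoid A →* M) (m : M) (t : Mˣ) (u : FreeMonoid A) : Mˣ :=
  u.recOn (if h : IsUnit m then h.unit else t)
    fun a v ih => if h : IsUnit (π (.of a * v) * m) then h.unit else ih

section lastUnit

variable (π)

lemma lastUnit_one_of_not_isUnit {m : M} (hm : ¬IsUnit m) (t : Mˣ) : lastUnit π m t 1 = t :=
  dif_neg hm

lemma lastUnit_of_mul_of_not_isUnit {m : M} {a : A} {u : FreeMonoid A}
    (h : ¬IsUnit (π (.of a * u) * m)) (t : Mˣ) :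
    lastUnit π m t (.of a * u) = lastUnit π m t u :=
  dif_neg h

lemma coe_lastUnit_of_isUnit {m : M} {u : FreeMonoid A} (h : IsUnit (π u * m)) (t : Mˣ) :
    (lastUnit π m t u : M) = π u * m := by
  cases u using FreeMonoid.casesOn with
  | one =>
    rw [map_one, one_mul] at h ⊢
    exact congrArg Units.val (dif_pos h)
  | of_mul a u => exact congrArg Units.val (dif_pos h)

lemma lastUnit_mul (m : M) (t : Mˣ) (u v : FreeMonoid A) :
    lastUnit π m t (u * v) = lastUnit π (π v * m) (lastUnit π m t v) u := by
  have hmul (u : FreeMonoid A) : π (u * v) * m = π u * (π v * m) := by rw [map_mul, mul_assoc]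
  have isUnit_case {u : FreeMonoid A} (h : IsUnit (π u * (π v * m))) :
      lastUnit π m t (u * v) = lastUnit π (π v * m) (lastUnit π m t v) u := by
    ext
    rw [coe_lastUnit_of_isUnit π h, coe_lastUnit_of_isUnit π ((hmul u).symm ▸ h), hmul]
  induction u using FreeMonoid.inductionOn' with
  | one =>
    by_cases h : IsUnit (π v * m)
    · exact isUnit_case (by rwa [map_one, one_mul])
    · rw [one_mul, lastUnit_one_of_not_isUnit π h]
  | of_mul a u ih =>
    by_cases h : IsUnit (π (.of a * u) * (π v * m))
    · exact isUnit_case h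
    · rw [lastUnit_of_mul_of_not_isUnit π h, ← ih, mul_assoc, lastUnit_of_mul_of_not_isUnit]
      rwa [← mul_assoc, hmul]

lemma lastUnit_mul_units (m : M) (t g : Mˣ) (u : FreeMonoid A) :
    lastUnit π (m * g) (t * g) u = lastUnit π m t u * g := by
  have isUnit_case {u : FreeMonoid A} (h : IsUnit (π u * m)) :
      lastUnit π (m * g) (t * g) u = lastUnit π m t u * g := by
    have hg : IsUnit (π u * (m * g)) := by
      rw [← mul_assoc]
      exact h.mul g.isUnit
    ext
    rw [Units.val_mul, coe_lastUnit_of_isUnit π h, coe_lastUnit_of_isUnit π hg, mul_assoc]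
  have not_isUnit {x : M} (h : ¬IsUnit (x * m)) : ¬IsUnit (x * (m * g)) := by
    rwa [← mul_assoc, Units.isUnit_mul_units]
  induction u using FreeMonoid.inductionOn' with
  | one =>
    by_cases h : IsUnit m
    · exact isUnit_case (by rwa [map_one, one_mul])
    · rw [lastUnit_one_of_not_isUnit π h, lastUnit_one_of_not_isUnit]
      rwa [Units.isUnit_mul_units]
  | of_mul a u ih =>
    by_cases h : IsUnit (π (.of a * u) * m)
    · exact isUnit_case h
    · rw [lastUnit_of_mul_of_not_isUnit π h, lastUnit_of_mul_of_not_isUnit π (not_isUnit h), ih]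

variable {π}

lemma lastUnit_of_mul_eq_one {m l : M} {u : FreeMonoid A} (hu : l * π u = 1) (hm : ¬IsUnit m)
    (t : Mˣ) : lastUnit π m t u = t := by
  induction u using FreeMonoid.inductionOn' generalizing l with
  | one => exact lastUnit_one_of_not_isUnit π hm t
  | of_mul a u ih =>
    have hnot : ¬IsUnit (π (.of a * u) * m) := by
      rintro ⟨g, hg⟩
      obtain ⟨h, hh⟩ : IsUnit (π (.of a * u)) :=
        isUnit_of_mul_eq_one_of_mul_eq_one hu
          (show π (.of a * u) * (m * ↑g⁻¹) = 1 by rw [← mul_assoc, ← hg, Units.mul_inv])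
      exact hm ((Units.isUnit_units_mul h m).1 (hh ▸ hg ▸ g.isUnit))
    rw [lastUnit_of_mul_of_not_isUnit π hnot]
    exact ih (l := l * π (.of a)) (by rw [mul_assoc, ← map_mul, hu])

lemma lastUnit_of_map_eq_one {w : FreeMonoid A} (hw : π w = 1) (m : M) (t : Mˣ) :
    lastUnit π m t w = lastUnit π m t 1 := by
  by_cases hm : IsUnit m
  · ext
    rw [coe_lastUnit_of_isUnit π (by rwa [hw, one_mul]),
      coe_lastUnit_of_isUnit π (by rwa [map_one, one_mul]), hw, map_one]
  · rw [lastUnit_of_mul_eq_one (l := 1) (by rw [hw, mul_one]) hm, lastUnit_one_of_not_isUnit π hm]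

end lastUnit

/-- The congruence identifying words that have the same value and the same last units, so that
last units depend only on the value of a word once this congruence contains the kernel. -/
def lastUnitCon (π : FreeMonoid A →* M) : Con (FreeMonoid A) where
  r u v := π u = π v ∧ ∀ m t, lastUnit π m t u = lastUnit π m t v
  iseqv :=
    { refl := fun _ => ⟨rfl, fun _ _ => rfl⟩
      symm := fun h => ⟨h.1.symm, fun m t => (h.2 m t).symm⟩
      trans := fun h₁ h₂ => ⟨h₁.1.trans h₂.1, fun m t => (h₁.2 m t).trans (h₂.2 m t)⟩ }
  mul' := by
    rintro u u' v v' ⟨hu, hu_last⟩ ⟨hv, hv_last⟩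
    refine ⟨by rw [map_mul, map_mul, hu, hv], fun m t => ?_⟩
    rw [lastUnit_mul, lastUnit_mul, hv, hv_last, hu_last]

namespace IsSpecial

variable (hπ : IsSpecial π)
include hπ

lemma lastUnit_eq {u v : FreeMonoid A} (h : π u = π v) (m : M) (t : Mˣ) :
    lastUnit π m t u = lastUnit π m t v := by
  have hker : Con.ker π ≤ lastUnitCon π := hπ.ker_le fun w hw =>
    ⟨hw.trans (map_one π).symm, lastUnit_of_map_eq_one hw⟩
  exact (hker h).2 m t

theorem eq_one_of_mul_units_eq_self {m : M} {g : Mˣ} (h : m * g = m) : g = 1 := by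
  obtain ⟨u, rfl⟩ := hπ.surjective m
  obtain ⟨v, hv⟩ := hπ.surjective (g : M)
  have hlast : lastUnit π 1 1 v = g := by
    ext
    rw [coe_lastUnit_of_isUnit π (by simp [hv]), mul_one, hv]
  refine (mul_eq_left (a := lastUnit π 1 1 u)).1 ?_
  calc lastUnit π 1 1 u * g = lastUnit π (1 * g) (1 * g) u := (lastUnit_mul_units π 1 1 g u).symm
    _ = lastUnit π 1 1 (u * v) := by rw [lastUnit_mul, hlast, hv, mul_one, one_mul, one_mul]
    _ = lastUnit π 1 1 u := hπ.lastUnit_eq (by rw [map_mul, hv, h]) 1 1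

/-! ### Cancellation of one-sided units -/

theorem eq_one_of_mul_eq_self {m p r : M} (hp : p * r = 1) (h : m * p = m) : p = 1 := by
  obtain ⟨g, rfl⟩ : IsUnit p := by
    by_contra hpu
    exact (hπ.unitLength_lt_unitLength_mul m hp hpu).ne (by rw [h])
  rw [hπ.eq_one_of_mul_units_eq_self h, Units.val_one]

theorem eq_of_mul_eq_mul_left {m p q r s : M} (hp : p * r = 1) (hq : q * s = 1)
    (h : m * p = m * q) : p = q := by
  rcases hπ.exists_eq_mul_of_mul_eq_mul hp h with ⟨k, hm, rfl⟩ | ⟨k, hm, rfl⟩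
  · rw [hπ.eq_one_of_mul_eq_self (mul_assoc k p s ▸ hq) hm.symm, one_mul]
  · rw [hπ.eq_one_of_mul_eq_self (mul_assoc k q r ▸ hp) hm.symm, one_mul]

theorem eq_of_mul_eq_mul_right {m p q r s : M} (hp : r * p = 1) (hq : s * q = 1)
    (h : p * m = q * m) : p = q :=
  MulOpposite.op_injective <| hπ.reverseOp.eq_of_mul_eq_mul_left (m := .op m)
    (congrArg MulOpposite.op hp) (congrArg MulOpposite.op hq) (congrArg MulOpposite.op h)

end IsSpecial

/-! ### The action on pairs -/

/-- The monoid `N` of pairs `(u, v)` with `u * v = 1`. -/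
def inversePairs (M : Type*) [Monoid M] : Submonoid (M × Mᵐᵒᵖ) where
  carrier := {n | n.1 * n.2.unop = 1}
  one_mem' := mul_one 1
  mul_mem' {a b} (ha : a.1 * a.2.unop = 1) (hb : b.1 * b.2.unop = 1) := by
    change a.1 * b.1 * (b.2.unop * a.2.unop) = 1
    rw [mul_assoc, ← mul_assoc b.1, hb, one_mul, ha]

/-- The right action `(m₁, m₂) · (n₁, n₂) = (m₁ * n₁, n₂ * m₂)` of `N`, encoded as a left action of
the opposite monoid. -/
instance : MulAction (inversePairs M)ᵐᵒᵖ (M × M) where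
  smul n m := (m.1 * n.unop.1.1, n.unop.1.2.unop * m.2)
  one_smul m := Prod.ext (mul_one m.1) (one_mul m.2)
  mul_smul _ _ m := Prod.ext (mul_assoc m.1 _ _).symm (mul_assoc _ _ m.2)

lemma isUnit_inversePairs {n : inversePairs M} (h : IsUnit n.1.1) : IsUnit n := by
  have hn : n.1.1 * n.1.2.unop = 1 := n.2
  have hn' : n.1.2.unop * n.1.1 = 1 := by
    obtain ⟨g, hg⟩ := h
    rw [← hg] at hn ⊢
    rw [← Units.mul_eq_one_iff_inv_eq.1 hn, Units.inv_mul]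
  exact isUnit_iff_exists.2 ⟨⟨(n.1.2.unop, .op n.1.1), hn'⟩,
    Subtype.ext (Prod.ext hn (congrArg MulOpposite.op hn)),
    Subtype.ext (Prod.ext hn' (congrArg MulOpposite.op hn'))⟩

lemma exists_eq_smul_of_smul_eq_smul {s t : (inversePairs M)ᵐᵒᵖ} {b c : M × M}
    (h : s • b = t • c) {k : M} (hb : b.1 = c.1 * k) (ht : t.unop.1.1 = k * s.unop.1.1) :
    ∃ p : (inversePairs M)ᵐᵒᵖ, b = p • c := by
  obtain ⟨⟨⟨s₁, s₂⟩, hs : s₁ * s₂.unop = 1⟩⟩ := s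
  obtain ⟨⟨⟨t₁, t₂⟩, ht' : t₁ * t₂.unop = 1⟩⟩ := t
  replace ht : t₁ = k * s₁ := ht
  have hk : k * (s₁ * t₂.unop) = 1 := by rw [← mul_assoc, ← ht, ht']
  have h₂ : s₂.unop * b.2 = t₂.unop * c.2 := congrArg Prod.snd h
  refine ⟨.op ⟨(k, .op (s₁ * t₂.unop)), hk⟩, Prod.ext hb ?_⟩
  calc b.2 = s₁ * (s₂.unop * b.2) := by rw [← mul_assoc, hs, one_mul]
    _ = s₁ * t₂.unop * c.2 := by rw [h₂, mul_assoc]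

namespace IsSpecial

variable (hπ : IsSpecial π)
include hπ

lemma smul_left_injective {s t : (inversePairs M)ᵐᵒᵖ} {m : M × M} (h : s • m = t • m) :
    s = t := by
  have h₁ := hπ.eq_of_mul_eq_mul_left s.unop.2 t.unop.2 (congrArg Prod.fst h)
  have h₂ := hπ.eq_of_mul_eq_mul_right s.unop.2 t.unop.2 (congrArg Prod.snd h)
  exact MulOpposite.unop_injective <|
    Subtype.ext (Prod.ext h₁ (MulOpposite.unop_injective h₂))

lemma exists_eq_smul_or_of_smul_eq_smul {s t : (inversePairs M)ᵐᵒᵖ} {b c : M × M}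
    (h : s • b = t • c) :
    (∃ p : (inversePairs M)ᵐᵒᵖ, b = p • c) ∨ ∃ p : (inversePairs M)ᵐᵒᵖ, c = p • b := by
  rcases hπ.exists_eq_mul_of_mul_eq_mul s.unop.2 (congrArg Prod.fst h) with
    ⟨k, hb, ht⟩ | ⟨k, hc, hs⟩
  · exact .inl (exists_eq_smul_of_smul_eq_smul h hb ht)
  · exact .inr (exists_eq_smul_of_smul_eq_smul h.symm hc hs)

lemma unitLength_lt_of_not_isUnit {n : (inversePairs M)ᵐᵒᵖ} (hn : ¬IsUnit n) (m : M × M) :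
    unitLength π m.1 < unitLength π (n • m).1 :=
  hπ.unitLength_lt_unitLength_mul m.1 n.unop.2 fun h => hn (isUnit_inversePairs h).op

theorem exists_bijective_inversePairs_smul :
    ∃ B : Set (M × M),
      Function.Bijective fun p : B × (inversePairs M)ᵐᵒᵖ => p.2 • (p.1 : M × M) :=
  exists_bijective_smul (fun m => unitLength π m.1)
    (fun _ m hn => hπ.unitLength_lt_of_not_isUnit hn m)
    (fun _ _ _ => hπ.smul_left_injective) (fun _ _ _ _ => hπ.exists_eq_smul_or_of_smul_eq_smul)

end IsSpecial

end SpecialMonoid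

open SpecialMonoid in
theorem special_monoid_MxM_free_N_set_general {A : Type*}
    (rel : FreeMonoid A → FreeMonoid A → Prop) (hrel : ∀ x y, rel x y → y = 1)
    (N : Submonoid (PresentedMonoid rel × (PresentedMonoid rel)ᵐᵒᵖ))
    (hN : ∀ p : PresentedMonoid rel × (PresentedMonoid rel)ᵐᵒᵖ, p ∈ N ↔ p.1 * p.2.unop = 1) :
    ∃ B : Set (PresentedMonoid rel × PresentedMonoid rel),
      ∀ m : PresentedMonoid rel × PresentedMonoid rel,
        ∃! x : (PresentedMonoid rel × PresentedMonoid rel) ×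
            (PresentedMonoid rel × (PresentedMonoid rel)ᵐᵒᵖ),
          x.1 ∈ B ∧ x.2 ∈ N ∧ m = (x.1.1 * x.2.1, x.2.2.unop * x.1.2) := by
  obtain rfl : N = inversePairs _ := Submonoid.ext hN
  obtain ⟨B, hB⟩ := (isSpecial_mk rel hrel).exists_bijective_inversePairs_smul
  refine ⟨B, fun m => ?_⟩
  obtain ⟨⟨b, n⟩, hbn, huniq⟩ := hB.existsUnique m
  refine ⟨(b, n.unop), ⟨b.2, n.unop.2, hbn.symm⟩, ?_⟩
  rintro ⟨b', n'⟩ ⟨hb', hn', h⟩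
  obtain ⟨rfl, rfl⟩ := Prod.mk.inj (huniq (⟨b', hb'⟩, .op ⟨n', hn'⟩) h.symm)
  rfl

/-- Let `M = ⟨A ∣ w₁ = 1, …, w_k = 1⟩` be a finitely presented special monoid and `N` the
submonoid of `M × Mᵐᵒᵖ` consisting of the pairs `(u, v)` with `u * v = 1` in `M`.  Then
`M × M` is a free right `N`-set under `(m₁, m₂)·(n₁, n₂) = (m₁ n₁, n₂ m₂)`: there is a
subset `B ⊆ M × M` such that every element of `M × M` is uniquely of the form
`(b₁ n₁, n₂ b₂)` with `(b₁, b₂) ∈ B` and `(n₁, n₂) ∈ N`. -/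
theorem special_monoid_MxM_free_N_set {A : Type*} [Fintype A] {k : ℕ}
    (w : Fin k → FreeMonoid A)
    (rel : FreeMonoid A → FreeMonoid A → Prop)
    (hrel : ∀ x y, rel x y ↔ ∃ i : Fin k, x = w i ∧ y = 1)
    (N : Submonoid (PresentedMonoid rel × (PresentedMonoid rel)ᵐᵒᵖ))
    (hN : ∀ p : PresentedMonoid rel × (PresentedMonoid rel)ᵐᵒᵖ,
      p ∈ N ↔ p.1 * p.2.unop = 1) :
    ∃ B : Set (PresentedMonoid rel × PresentedMonoid rel),
      ∀ m : PresentedMonoid rel × PresentedMonoid rel,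
        ∃! x : (PresentedMonoid rel × PresentedMonoid rel) ×
            (PresentedMonoid rel × (PresentedMonoid rel)ᵐᵒᵖ),
          x.1 ∈ B ∧ x.2 ∈ N ∧ m = (x.1.1 * x.2.1, x.2.2.unop * x.1.2) := by
  exact special_monoid_MxM_free_N_set_general rel (fun x y h => ((hrel x y).1 h).choose_spec.2) N hN
end
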